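/- arXiv:math/0504533 — 3 statements merged into one kernel-verified Lean document; each statement's English description precedes it below -/
import Mathlib

section
/- Fix D, E ∈ K^*. The set of S-unit ratios { u/v : u, v ∈ R_S^*, and there exists y ∈ R_S with y² = D·u + E·v } is finite. -/
section Heights

open Height Height.AdmissibleAbsValues Real

variable {K : Type*} [Field K] [AdmissibleAbsValues K] {ι κ : Type*} [Finite ι] [Finite κ]

/-- A comparison of heights from a comparison of local maxima. -/
theorem mulHeight_le_of_iSup_le {x : ι → K} {y : κ → K} (hx : x ≠ 0) (hy : y ≠ 0) {C : ℝ}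
    (harch : ∀ v ∈ archAbsVal (K := K), ⨆ i, v (y i) ≤ C * ⨆ i, v (x i))
    (hnon : ∀ v ∈ nonarchAbsVal (K := K), ⨆ i, v (y i) ≤ ⨆ i, v (x i)) :
    mulHeight y ≤ C ^ totalWeight K * mulHeight x := by
  rw [mulHeight_eq hx, mulHeight_eq hy, ← mul_assoc]
  have harch' : (archAbsVal.map fun v : AbsoluteValue K ℝ ↦ ⨆ i, v (y i)).prod ≤
      C ^ totalWeight K * (archAbsVal.map fun v : AbsoluteValue K ℝ ↦ ⨆ i, v (x i)).prod := by
    rw [← Multiset.prod_replicate, totalWeight, ← Multiset.map_const', ← Multiset.prod_map_mul]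
    exact Multiset.prod_map_le_prod_map₀ _ _
      (fun v _ ↦ Real.iSup_nonneg_of_nonnegHomClass v _) harch
  refine mul_le_mul harch' ?_ (finprod_nonneg fun v ↦ Real.iSup_nonneg_of_nonnegHomClass v.val _)
    (le_trans ?_ harch')
  · refine finprod_le_finprod (by fun_prop)
      (fun v ↦ Real.iSup_nonneg_of_nonnegHomClass v.val _) (by fun_prop) fun v ↦ hnon v.1 v.2
  · exact Multiset.prod_map_nonneg fun v _ ↦ Real.iSup_nonneg_of_nonnegHomClass v _

theorem abv_le_mulHeight₁_of_mem_archAbsVal {v : AbsoluteValue K ℝ} (hv : v ∈ archAbsVal (K := K))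
    (x : K) : v x ≤ mulHeight₁ x := by
  classical
  obtain ⟨s, hs⟩ := Multiset.exists_cons_of_mem hv
  rw [mulHeight₁_eq, hs, Multiset.map_cons, Multiset.prod_cons, mul_assoc]
  refine (le_max_left (v x) 1).trans (le_mul_of_one_le_right (by positivity) ?_)
  exact one_le_mul_of_one_le_of_one_le (Multiset.one_le_prod_map fun _ _ ↦ le_max_right ..) <|
    one_le_finprod fun _ ↦ le_max_right ..

theorem abv_le_mulHeight₁_of_mem_nonarchAbsVal {v : AbsoluteValue K ℝ}
    (hv : v ∈ nonarchAbsVal (K := K)) (x : K) : v x ≤ mulHeight₁ x := by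
  classical
  have hfin : (fun w : nonarchAbsVal (K := K) ↦ max (w.val x) 1).HasFiniteMulSupport := by
    fun_prop
  rw [mulHeight₁_eq]
  have h1 : v x ≤ ∏ᶠ w : nonarchAbsVal (K := K), max (w.val x) 1 := by
    set w₀ : nonarchAbsVal (K := K) := ⟨v, hv⟩
    have hone (s : Finset (nonarchAbsVal (K := K))) : 1 ≤ ∏ w ∈ s, max (w.val x) 1 := by
      simpa using Finset.prod_le_prod (s := s) (f := fun _ ↦ (1 : ℝ)) (by simp)
        fun w _ ↦ le_max_right (w.val x) 1
    rw [finprod_eq_prod_of_mulSupport_subset (s := insert w₀ hfin.toFinset) _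
      (fun w hw ↦ Finset.mem_coe.mpr
        (Finset.mem_insert_of_mem ((Set.Finite.mem_toFinset _).mpr hw))),
      ← Finset.mul_prod_erase _ _ (Finset.mem_insert_self ..)]
    exact (le_max_left (v x) 1).trans (le_mul_of_one_le_right (by positivity) (hone _))
  exact h1.trans (le_mul_of_one_le_left (finprod_nonneg fun _ ↦ by positivity)
    (Multiset.one_le_prod_map fun _ _ ↦ le_max_right ..))

/-- The logarithm of an absolute value is controlled by the height. -/
theorem abs_log_abv_le_logHeight₁ {v : AbsoluteValue K ℝ}
    (hv : v ∈ archAbsVal (K := K) ∨ v ∈ nonarchAbsVal (K := K)) {x : K} (hx : x ≠ 0) :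
    |log (v x)| ≤ logHeight₁ x := by
  have key (y : K) : v y ≤ mulHeight₁ y :=
    hv.elim (abv_le_mulHeight₁_of_mem_archAbsVal · y) (abv_le_mulHeight₁_of_mem_nonarchAbsVal · y)
  rw [abs_le']
  refine ⟨log_le_log (v.pos hx) (key x), ?_⟩
  rw [← log_inv, ← map_inv₀, ← logHeight₁_inv]
  exact log_le_log (v.pos (inv_ne_zero hx)) (key x⁻¹)

/-- The height of a tuple of units outside a finite set `T` of nonarchimedean absolute values is
bounded in terms of the absolute values which are archimedean or in `T`. -/
theorem logHeight_le_of_log_abv_le [Nonempty ι] (T : Finset (AbsoluteValue K ℝ)) {x : ι → K}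
    (hx : ∀ i, x i ≠ 0)
    (hunit : ∀ v ∈ nonarchAbsVal (K := K), v ∉ T → ∀ i, v (x i) = 1) {B : ℝ} (hB : 0 ≤ B)
    (harch : ∀ v ∈ archAbsVal (K := K), ∀ i, log (v (x i)) ≤ B)
    (hT : ∀ v ∈ T, ∀ i, log (v (x i)) ≤ B) :
    logHeight x ≤ (totalWeight K + T.card) * B := by
  classical
  have hx0 : x ≠ 0 := fun h ↦ hx (Classical.arbitrary ι) (congrFun h _)
  have hsup (v : AbsoluteValue K ℝ) (h : ∀ i, log (v (x i)) ≤ B) : ⨆ i, v (x i) ≤ exp B :=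
    ciSup_le fun i ↦ (log_le_iff_le_exp (v.pos (hx i))).mp (h i)
  have h1 : (archAbsVal.map fun v : AbsoluteValue K ℝ ↦ ⨆ i, v (x i)).prod ≤
      exp B ^ totalWeight K := by
    rw [← Multiset.prod_replicate, totalWeight, ← Multiset.map_const']
    exact Multiset.prod_map_le_prod_map₀ _ _
      (fun v _ ↦ Real.iSup_nonneg_of_nonnegHomClass v _) fun v hv ↦ hsup v (harch v hv)
  have h2 : ∏ᶠ v : nonarchAbsVal (K := K), ⨆ i, v.val (x i) ≤ exp B ^ T.card := by
    set T' : Finset (nonarchAbsVal (K := K)) := T.preimage Subtype.val Subtype.val_injective.injOn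
    rw [finprod_eq_prod_of_mulSupport_subset (s := T')]
    · calc _ ≤ ∏ v ∈ T', exp B := Finset.prod_le_prod
            (fun v _ ↦ Real.iSup_nonneg_of_nonnegHomClass v.val _)
            fun v hv ↦ hsup _ (hT _ (by simpa [T'] using hv))
        _ = exp B ^ T'.card := by simp
        _ ≤ _ := by
          refine pow_le_pow_right₀ (one_le_exp hB) ?_
          rw [Finset.card_preimage]
          exact Finset.card_filter_le _ _
    · intro v hv
      by_contra h
      refine hv ?_
      simp [hunit v.1 v.2 (by simpa [T'] using h)]
  rw [logHeight_eq_log_mulHeight, log_le_iff_le_exp (mulHeight_pos x), mulHeight_eq hx0, add_mul,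
    exp_add, exp_nat_mul, exp_nat_mul]
  exact mul_le_mul h1 h2 (finprod_nonneg fun v ↦ Real.iSup_nonneg_of_nonnegHomClass v.val _)
    (by positivity)

end Heights

section Primitive

open Polynomial

variable {K : Type*} [Field K]

/-- The primitive of a polynomial without constant term. -/
noncomputable def primitive : K[X] →ₗ[K] K[X] :=
  Polynomial.lsum fun n ↦ (((n : K) + 1)⁻¹) • Polynomial.monomial (n + 1)

theorem primitive_X_pow (n : ℕ) :
    primitive (X ^ n : K[X]) = C ((n : K) + 1)⁻¹ * X ^ (n + 1) := by
  rw [primitive, lsum_apply, X_pow_eq_monomial, sum_monomial_index _ _ (by simp),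
    LinearMap.smul_apply, smul_monomial, smul_eq_mul, mul_one, C_mul_X_pow_eq_monomial]

theorem eval_zero_primitive (p : K[X]) : (primitive p).eval 0 = 0 := by
  induction p using Polynomial.induction_on' with
  | add p q hp hq => simp [hp, hq]
  | monomial n a =>
    rw [← mul_one a, ← smul_eq_mul a, ← smul_monomial, ← X_pow_eq_monomial, map_smul,
      primitive_X_pow]
    simp

theorem natDegree_primitive_le (p : K[X]) : (primitive p).natDegree ≤ p.natDegree + 1 := by
  rw [primitive, Polynomial.lsum_apply, Polynomial.sum]
  refine natDegree_sum_le_of_forall_le _ _ fun i hi ↦ ?_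
  refine (natDegree_smul_le _ _).trans ((natDegree_monomial_le _).trans ?_)
  exact Nat.succ_le_succ (le_natDegree_of_mem_supp _ hi)

/-- The integral of a polynomial over `[0, 1]`. -/
noncomputable def unitIntegral : K[X] →ₗ[K] K := (Polynomial.leval 1).comp primitive

theorem unitIntegral_X_pow (n : ℕ) : unitIntegral (X ^ n : K[X]) = ((n : K) + 1)⁻¹ := by
  simp [unitIntegral, primitive_X_pow, leval_apply]

/-- The polynomial `(t (t - 1) (t - x)) ^ N`, whose periods give Padé approximations. -/
noncomputable def padeWeight (N : ℕ) (x : K) : K[X] := (X * (X - C 1) * (X - C x)) ^ N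

theorem padeWeight_ne_zero (N : ℕ) (x : K) : padeWeight N x ≠ 0 :=
  pow_ne_zero _ (mul_ne_zero (mul_ne_zero X_ne_zero (X_sub_C_ne_zero _)) (X_sub_C_ne_zero _))

variable [CharZero K]

theorem derivative_primitive (p : K[X]) : derivative (primitive p) = p := by
  induction p using Polynomial.induction_on' with
  | add p q hp hq => simp [hp, hq]
  | monomial n a =>
    rw [← mul_one a, ← smul_eq_mul a, ← smul_monomial, ← X_pow_eq_monomial, map_smul,
      primitive_X_pow, derivative_smul, derivative_C_mul_X_pow]
    have : (n : K) + 1 ≠ 0 := by exact_mod_cast n.succ_ne_zero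
    simp [this]

theorem eval_primitive_sub_eval_primitive (p : K[X]) (a b : K) :
    (primitive p).eval b - (primitive p).eval a =
      (b - a) * unitIntegral (p.comp (C a + C (b - a) * X)) := by
  set l : K[X] := C a + C (b - a) * X with hl
  have hd : derivative ((primitive p).comp l - C (b - a) * primitive (p.comp l)) = 0 := by
    simp [derivative_comp, derivative_primitive, hl]
  have h := derivative_eq_zero.mp hd
  obtain ⟨c, hc⟩ := natDegree_eq_zero.mp h
  have h0 := congrArg (eval 0) hc
  have h1 := congrArg (eval 1) hc
  have hl0 : l.eval 0 = a := by simp [hl]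
  have hl1 : l.eval 1 = b := by simp [hl]
  rw [eval_C, eval_sub, eval_mul, eval_C, eval_comp, hl0, eval_zero_primitive] at h0
  rw [eval_C, eval_sub, eval_mul, eval_C, eval_comp, hl1] at h1
  rw [unitIntegral, LinearMap.comp_apply, leval_apply]
  linear_combination h0 - h1

theorem pow_succ_dvd_of_pow_dvd_derivative {Q : K[X]} {a : K} {N : ℕ} (hroot : Q.IsRoot a)
    (hdvd : (X - C a) ^ N ∣ derivative Q) : (X - C a) ^ (N + 1) ∣ Q := by
  by_cases hQ : Q = 0
  · simp [hQ]
  have hpos := (rootMultiplicity_pos hQ).mpr hroot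
  have hQ' : derivative Q ≠ 0 := fun h ↦ by
    obtain ⟨c, rfl⟩ := natDegree_eq_zero.mp (derivative_eq_zero.mp h)
    simp_all
  rw [← le_rootMultiplicity_iff hQ]
  have := (le_rootMultiplicity_iff hQ').mpr hdvd
  rw [derivative_rootMultiplicity_of_root hroot] at this
  omega

theorem eq_zero_of_primitive_eval_eq {N : ℕ} {x : K} (hx0 : x ≠ 0) (hx1 : x ≠ 1) {g : K[X]}
    (hg : g.natDegree ≤ 1)
    (h01 : (primitive (g * padeWeight N x)).eval 1 = (primitive (g * padeWeight N x)).eval 0)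
    (h1x : (primitive (g * padeWeight N x)).eval x = (primitive (g * padeWeight N x)).eval 1) :
    g = 0 := by
  set F := primitive (g * padeWeight N x) with hF
  set Q := F - C (F.eval 0) with hQ
  have hQ' : derivative Q = g * padeWeight N x := by simp [hQ, hF, derivative_primitive]
  have d0 : (X - C 0) ^ (N + 1) ∣ Q := by
    refine pow_succ_dvd_of_pow_dvd_derivative (by simp [hQ]) ?_
    rw [hQ', padeWeight, C_0, sub_zero, mul_pow, mul_pow]
    exact dvd_mul_of_dvd_right (dvd_mul_of_dvd_left (dvd_mul_right _ _) _) _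
  have d1 : (X - C 1) ^ (N + 1) ∣ Q := by
    refine pow_succ_dvd_of_pow_dvd_derivative (by simp [hQ, h01]) ?_
    rw [hQ', padeWeight, mul_pow, mul_pow]
    exact dvd_mul_of_dvd_right (dvd_mul_of_dvd_left (dvd_mul_left _ _) _) _
  have dx : (X - C x) ^ (N + 1) ∣ Q := by
    refine pow_succ_dvd_of_pow_dvd_derivative (by simp [hQ, h01, h1x]) ?_
    rw [hQ', padeWeight, mul_pow]
    exact dvd_mul_of_dvd_right (dvd_mul_left _ _) _
  have cop {a b : K} (h : a ≠ b) : IsCoprime ((X - C a) ^ (N + 1)) ((X - C b) ^ (N + 1)) :=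
    (isCoprime_X_sub_C_of_isUnit_sub (sub_ne_zero.mpr h).isUnit).pow
  have hdvd := ((cop hx0.symm).mul_left (cop hx1.symm)).mul_dvd
    ((cop zero_ne_one).mul_dvd d0 d1) dx
  have hdeg : Q.natDegree < ((X - C 0) ^ (N + 1) * (X - C 1) ^ (N + 1) *
      (X - C x) ^ (N + 1) : K[X]).natDegree := by
    rw [natDegree_mul (by simp [X_sub_C_ne_zero, -map_one, -map_zero, -sub_zero])
        (by simp [X_sub_C_ne_zero]),
      natDegree_mul (pow_ne_zero _ (X_sub_C_ne_zero _)) (pow_ne_zero _ (X_sub_C_ne_zero _))]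
    simp only [natDegree_pow, natDegree_X_sub_C]
    have h1 : (padeWeight N x).natDegree ≤ N * 3 := by
      rw [padeWeight, natDegree_pow]
      gcongr
      refine natDegree_mul_le.trans ?_
      have := natDegree_mul_le (p := (X : K[X])) (q := X - C 1)
      rw [natDegree_X, natDegree_X_sub_C] at this
      rw [natDegree_X_sub_C]
      omega
    have h2 := natDegree_primitive_le (g * padeWeight N x)
    have h3 := natDegree_mul_le (p := g) (q := padeWeight N x)
    have h4 : Q.natDegree = F.natDegree := natDegree_sub_C
    rw [← hF] at h2
    omega
  have hQ0 : Q = 0 := eq_zero_of_dvd_of_natDegree_lt hdvd hdeg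
  rw [hQ0, derivative_zero] at hQ'
  exact (mul_eq_zero.mp hQ'.symm).resolve_right (padeWeight_ne_zero N x)

end Primitive

section PadeForm

open Polynomial

theorem dvd_lcmUpto {k n : ℕ} (hk : k ≠ 0) (hkn : k ≤ n) : k ∣ Nat.lcmUpto n :=
  Finset.dvd_lcm (f := id) (Finset.mem_Icc.mpr ⟨Nat.one_le_iff_ne_zero.mpr hk, hkn⟩)

/-- The moments of `s ^ N (s - 1) ^ N` on `[0, 1]` have a small common denominator. -/
theorem exists_int_eq_lcmUpto_mul_unitIntegral (K : Type*) [Field K] [CharZero K] (N : ℕ) {j : ℕ}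
    (hj : j ≤ N + 1) :
    ∃ m : ℤ, (Nat.lcmUpto (3 * N + 2) : K) *
        unitIntegral (X ^ N * (X - C 1) ^ N * X ^ j : K[X]) = m ∧
      |m| ≤ Nat.lcmUpto (3 * N + 2) * 2 ^ N := by
  set d := Nat.lcmUpto (3 * N + 2)
  refine ⟨∑ i ∈ Finset.range (N + 1),
    (-1) ^ (N - i) * (N.choose i : ℤ) * ((d / (N + j + i + 1) : ℕ) : ℤ), ?_, ?_⟩
  · have hexp : (X ^ N * (X - C 1) ^ N * X ^ j : K[X]) = ∑ i ∈ Finset.range (N + 1),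
        ((-1) ^ (N - i) * (N.choose i : K)) • X ^ (N + j + i) := by
      rw [sub_eq_add_neg, add_pow, Finset.mul_sum, Finset.sum_mul]
      refine Finset.sum_congr rfl fun i _ ↦ ?_
      rw [smul_eq_C_mul]
      simp
      ring
    rw [hexp, map_sum, Finset.mul_sum]
    rw [Int.cast_sum]
    refine Finset.sum_congr rfl fun i hi ↦ ?_
    rw [Finset.mem_range] at hi
    have hdvd : N + j + i + 1 ∣ d := dvd_lcmUpto (by omega) (by omega)
    have hne : ((N + j + i + 1 : ℕ) : K) ≠ 0 := Nat.cast_ne_zero.mpr (by omega)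
    rw [map_smul, unitIntegral_X_pow, smul_eq_mul, Int.cast_mul, Int.cast_natCast,
      Nat.cast_div hdvd hne]
    push_cast
    ring
  · calc _ ≤ ∑ i ∈ Finset.range (N + 1),
          |(-1) ^ (N - i) * (N.choose i : ℤ) * ((d / (N + j + i + 1) : ℕ) : ℤ)| :=
          Finset.abs_sum_le_sum_abs _ _
      _ ≤ ∑ i ∈ Finset.range (N + 1), (N.choose i : ℤ) * d := by
        refine Finset.sum_le_sum fun i _ ↦ ?_
        rw [abs_mul, abs_mul, abs_pow, abs_neg, abs_one, one_pow, one_mul, Nat.abs_cast,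
          Nat.abs_cast]
        gcongr
        exact Nat.div_le_self _ _
      _ = d * 2 ^ N := by
        rw [← Finset.sum_mul, mul_comm]
        congr 1
        exact_mod_cast Nat.sum_range_choose N

variable {K : Type*} [Field K]

/-- The cofactor of `(b - a) ^ (2 * N + 1)` in the integral over `[a, b]` of
`(p + q t) ((t - a) (t - b) (t - c)) ^ N`, as a form in `A = a - c`, `l = b - a`. -/
noncomputable def padeForm (N : ℕ) (A l p q : K) : K :=
  unitIntegral (X ^ N * (X - C 1) ^ N * (C A + C l * X) ^ N * (C p + C q * X))

variable [CharZero K]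

theorem eval_primitive_sub_eq_padeForm (N : ℕ) (a b c p q : K) :
    (primitive ((C p + C q * X) * ((X - C a) * (X - C b) * (X - C c)) ^ N)).eval b -
      (primitive ((C p + C q * X) * ((X - C a) * (X - C b) * (X - C c)) ^ N)).eval a =
    (b - a) ^ (2 * N + 1) * padeForm N (a - c) (b - a) (p + q * a) (q * (b - a)) := by
  rw [eval_primitive_sub_eval_primitive, pow_succ' (b - a), mul_assoc (b - a), padeForm,
    ← smul_eq_mul ((b - a) ^ (2 * N)), ← map_smul, smul_eq_C_mul]
  congr 2
  simp only [mul_comp, add_comp, C_comp, X_comp, pow_comp, sub_comp, C_add, C_sub, C_mul, C_pow,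
    mul_pow, C_1]
  have h1 : C a + (C b - C a) * X - C a = (C b - C a) * X := by ring
  have h2 : C a + (C b - C a) * X - C b = (C b - C a) * (X - 1) := by ring
  have h3 : C a + (C b - C a) * X - C c = C a - C c + (C b - C a) * X := by ring
  rw [h1, h2, h3, mul_pow, mul_pow, two_mul, pow_add]
  ring

theorem exists_padeForm_eq_sum (K : Type*) [Field K] [CharZero K] (N : ℕ) :
    ∃ m : ℕ → ℤ, (∀ j ≤ N + 1, |m j| ≤ Nat.lcmUpto (3 * N + 2) * 2 ^ N) ∧
      ∀ A l p q : K, (Nat.lcmUpto (3 * N + 2) : K) * padeForm N A l p q =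
        ∑ k ∈ Finset.range (N + 1),
          ((N.choose k : ℕ) : K) * (l ^ k * A ^ (N - k)) * (p * m k + q * m (k + 1)) := by
  choose! m hm hbound using fun j (hj : j ≤ N + 1) ↦
    exists_int_eq_lcmUpto_mul_unitIntegral K N hj
  refine ⟨m, hbound, fun A l p q ↦ ?_⟩
  have hexp : (X ^ N * (X - C 1) ^ N * (C A + C l * X) ^ N * (C p + C q * X) : K[X]) =
      ∑ k ∈ Finset.range (N + 1), ((N.choose k : K) * (l ^ k * A ^ (N - k))) •
        (p • (X ^ N * (X - C 1) ^ N * X ^ k) + q • (X ^ N * (X - C 1) ^ N * X ^ (k + 1))) := by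
    rw [add_comm (C A), add_pow, Finset.mul_sum, Finset.sum_mul]
    refine Finset.sum_congr rfl fun i _ ↦ ?_
    simp only [smul_eq_C_mul, C_mul, C_pow, C_eq_natCast, mul_pow]
    ring
  rw [padeForm, hexp, map_sum, Finset.mul_sum]
  refine Finset.sum_congr rfl fun k hk ↦ ?_
  rw [Finset.mem_range] at hk
  rw [map_smul, map_add, map_smul, map_smul, smul_eq_mul, smul_eq_mul, smul_eq_mul,
    ← hm k (by omega), ← hm (k + 1) (by omega)]
  ring

theorem abv_lcmUpto_mul_padeForm_le_of_isNonarchimedean {v : AbsoluteValue K ℝ}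
    (hv : IsNonarchimedean v) (N : ℕ) {A l p q : K} {M : ℝ} (hA : v A ≤ M) (hl : v l ≤ M)
    (hp : v p ≤ M) (hq : v q ≤ M) :
    v (Nat.lcmUpto (3 * N + 2) * padeForm N A l p q) ≤ M ^ (N + 1) := by
  obtain ⟨m, -, hm⟩ := exists_padeForm_eq_sum K N
  have hM : 0 ≤ M := (v.nonneg A).trans hA
  have hint (n : ℤ) : v n ≤ 1 := by
    obtain ⟨n, rfl | rfl⟩ := n.eq_nat_or_neg <;> simpa using hv.apply_natCast_le_one
  rw [hm]
  obtain ⟨k, hk, hle⟩ := hv.finset_image_add_of_nonempty (fun k ↦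
    ((N.choose k : ℕ) : K) * (l ^ k * A ^ (N - k)) * (p * m k + q * m (k + 1)))
    (Finset.nonempty_range_add_one (n := N))
  refine hle.trans ?_
  rw [Finset.mem_range] at hk
  have hpq : v (p * m k + q * m (k + 1)) ≤ M := by
    refine (hv _ _).trans (max_le ?_ ?_) <;> rw [map_mul]
    · exact (mul_le_of_le_one_right (v.nonneg _) (hint _)).trans hp
    · exact (mul_le_of_le_one_right (v.nonneg _) (hint _)).trans hq
  have hpow : v (l ^ k * A ^ (N - k)) ≤ M ^ N := by
    rw [map_mul, map_pow, map_pow]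
    calc _ ≤ M ^ k * M ^ (N - k) := by gcongr
      _ = M ^ N := by rw [← pow_add]; congr 1; omega
  rw [map_mul, map_mul, pow_succ]
  have hc : v ((N.choose k : ℕ) : K) ≤ 1 := hv.apply_natCast_le_one
  gcongr
  exact (mul_le_of_le_one_left (v.nonneg _) hc).trans hpow

theorem abv_lcmUpto_mul_padeForm_le (v : AbsoluteValue K ℝ) (N : ℕ) {A l p q : K} {M : ℝ}
    (hA : v A ≤ M) (hl : v l ≤ M) (hp : v p ≤ M) (hq : v q ≤ M) :
    v (Nat.lcmUpto (3 * N + 2) * padeForm N A l p q) ≤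
      (2 * 4 ^ N * Nat.lcmUpto (3 * N + 2)) * M ^ (N + 1) := by
  obtain ⟨m, hbound, hm⟩ := exists_padeForm_eq_sum K N
  set d := Nat.lcmUpto (3 * N + 2)
  have hM : 0 ≤ M := (v.nonneg A).trans hA
  have hint (j : ℕ) (hj : j ≤ N + 1) : v (m j) ≤ d * 2 ^ N := by
    have h1 : v (m j) ≤ |(m j : ℝ)| := by
      obtain ⟨n, h | h⟩ := (m j).eq_nat_or_neg <;> rw [h] <;> simpa using v.apply_nat_le_self n
    exact h1.trans (by exact_mod_cast hbound j hj)
  rw [hm]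
  refine (v.sum_le _ _).trans ?_
  calc _ ≤ ∑ k ∈ Finset.range (N + 1), (N.choose k : ℝ) * (M ^ N * (2 * M * (d * 2 ^ N))) := by
        refine Finset.sum_le_sum fun k hk ↦ ?_
        rw [Finset.mem_range] at hk
        have hpq : v (p * m k + q * m (k + 1)) ≤ 2 * M * (d * 2 ^ N) := by
          refine (v.add_le _ _).trans ?_
          rw [map_mul, map_mul, two_mul, add_mul]
          gcongr
          · exact hint _ (by omega)
          · exact hint _ (by omega)
        have hpow : v (l ^ k * A ^ (N - k)) ≤ M ^ N := by
          rw [map_mul, map_pow, map_pow]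
          calc _ ≤ M ^ k * M ^ (N - k) := by gcongr
            _ = M ^ N := by rw [← pow_add]; congr 1; omega
        rw [map_mul, map_mul, ← mul_assoc]
        gcongr
        exact v.apply_nat_le_self _
    _ = (2 * 4 ^ N * d) * M ^ (N + 1) := by
      rw [← Finset.sum_mul, ← Nat.cast_sum, Nat.sum_range_choose,
        show (4 : ℝ) = 2 * 2 by norm_num, mul_pow]
      push_cast
      ring

end PadeForm

section HeightGap

open Polynomial

variable {K : Type*} [Field K]

/-- The projective triple `(1 : x - 1 : -x)`, with vanishing sum, attached to `x`. -/
def zeroSumTriple (x : K) : Fin 3 → K := ![1, x - 1, -x]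

theorem zeroSumTriple_apply_ne_zero {x : K} (hx0 : x ≠ 0) (hx1 : x ≠ 1) (i : Fin 3) :
    zeroSumTriple x i ≠ 0 := by
  fin_cases i <;> simp [zeroSumTriple, sub_ne_zero, hx0, hx1]

/-- Up to a common denominator, the cofactors of the odd powers of `zeroSumTriple x` in the
integrals of `(p + q t) (t (t - 1) (t - x)) ^ N` over the three sides of the triangle `0, 1, x`. -/
noncomputable def padeTriple (N : ℕ) (x p q : K) : Fin 3 → K := fun i ↦
  Nat.lcmUpto (3 * N + 2) *
    ![padeForm N (0 - x) (1 - 0) (p + q * 0) (q * (1 - 0)),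
      padeForm N (1 - 0) (x - 1) (p + q * 1) (q * (x - 1)),
      padeForm N (x - 1) (0 - x) (p + q * x) (q * (0 - x))] i

variable [CharZero K]

theorem zeroSumTriple_pow_mul_padeTriple (N : ℕ) (x p q : K) :
    ∃ F : K[X], F = primitive ((C p + C q * X) * padeWeight N x) ∧
      zeroSumTriple x 0 ^ (2 * N + 1) * padeTriple N x p q 0 =
        Nat.lcmUpto (3 * N + 2) * (F.eval 1 - F.eval 0) ∧
      zeroSumTriple x 1 ^ (2 * N + 1) * padeTriple N x p q 1 =
        Nat.lcmUpto (3 * N + 2) * (F.eval x - F.eval 1) ∧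
      zeroSumTriple x 2 ^ (2 * N + 1) * padeTriple N x p q 2 =
        Nat.lcmUpto (3 * N + 2) * (F.eval 0 - F.eval x) := by
  refine ⟨_, rfl, ?_, ?_, ?_⟩
  · have := eval_primitive_sub_eq_padeForm N 0 1 x p q
    rw [show padeWeight N x = ((X - C 0) * (X - C 1) * (X - C x)) ^ N by simp [padeWeight], this]
    simp [zeroSumTriple, padeTriple]
  · have := eval_primitive_sub_eq_padeForm N 1 x 0 p q
    rw [show padeWeight N x = ((X - C 1) * (X - C x) * (X - C 0)) ^ N by
      rw [padeWeight, C_0, sub_zero]; ring, this]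
    simp [zeroSumTriple, padeTriple]
    ring
  · have := eval_primitive_sub_eq_padeForm N x 0 1 p q
    rw [show padeWeight N x = ((X - C x) * (X - C 0) * (X - C 1)) ^ N by
      rw [padeWeight, C_0, sub_zero]; ring, this]
    simp [zeroSumTriple, padeTriple]
    ring

theorem sum_zeroSumTriple_pow_mul_padeTriple (N : ℕ) (x p q : K) :
    ∑ i, zeroSumTriple x i ^ (2 * N + 1) * padeTriple N x p q i = 0 := by
  obtain ⟨F, -, h0, h1, h2⟩ := zeroSumTriple_pow_mul_padeTriple N x p q
  rw [Fin.sum_univ_three, h0, h1, h2]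
  ring

theorem padeTriple_linear (N : ℕ) (x p q : K) (i : Fin 3) :
    padeTriple N x p q i = p * padeTriple N x 1 0 i + q * padeTriple N x 0 1 i := by
  obtain ⟨m, -, hm⟩ := exists_padeForm_eq_sum K N
  have key (A l a b : K) : (Nat.lcmUpto (3 * N + 2) : K) * padeForm N A l (p + q * a) (q * b) =
      p * (Nat.lcmUpto (3 * N + 2) * padeForm N A l (1 + 0 * a) (0 * b)) +
      q * (Nat.lcmUpto (3 * N + 2) * padeForm N A l (0 + 1 * a) (1 * b)) := by
    simp only [hm, Finset.mul_sum, ← Finset.sum_add_distrib]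
    exact Finset.sum_congr rfl fun k _ ↦ by ring
  fin_cases i <;> exact key ..

theorem eq_zero_of_padeTriple_eq_zero {N : ℕ} {x p q : K} (hx0 : x ≠ 0) (hx1 : x ≠ 1)
    (h : padeTriple N x p q = 0) : p = 0 ∧ q = 0 := by
  obtain ⟨F, hF, h0, h1, -⟩ := zeroSumTriple_pow_mul_padeTriple N x p q
  have hd : (Nat.lcmUpto (3 * N + 2) : K) ≠ 0 := Nat.cast_ne_zero.mpr (Nat.lcmUpto_ne_zero _)
  simp only [h, Pi.zero_apply, mul_zero, zero_eq_mul, hd, false_or] at h0 h1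
  have hg : (C p + C q * X : K[X]) = 0 := by
    refine eq_zero_of_primitive_eval_eq (N := N) hx0 hx1 (by compute_degree) ?_ ?_
    · rw [← hF]; exact sub_eq_zero.mp h0
    · rw [← hF]; exact sub_eq_zero.mp h1
  constructor
  · simpa using congrArg (coeff · 0) hg
  · simpa using congrArg (coeff · 1) hg

/-- At least one of the two basic approximations at `x` is not proportional to a given triple. -/
theorem exists_padeTriple_not_proportional {N : ℕ} {x : K} (hx0 : x ≠ 0) (hx1 : x ≠ 1)
    {ξ : Fin 3 → K} (hξ : ξ 0 ≠ 0) :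
    ∃ p q : K, (p = 1 ∧ q = 0 ∨ p = 0 ∧ q = 1) ∧
      crossProduct ξ (padeTriple N x p q) ≠ 0 := by
  by_contra! H
  have hprop {w : Fin 3 → K} (h : crossProduct ξ w = 0) (i : Fin 3) : ξ 0 * w i = w 0 * ξ i := by
    have h1 := congrFun h 1
    have h2 := congrFun h 2
    simp [cross_apply] at h1 h2
    fin_cases i <;> simp
    · ring
    · linear_combination h2
    · linear_combination -h1
  have h1 := hprop (H 1 0 (by simp))
  have h2 := hprop (H 0 1 (by simp))
  set w := padeTriple N x 1 0
  set w' := padeTriple N x 0 1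
  have h3 : padeTriple N x (w' 0) (-w 0) = 0 := by
    funext i
    rw [padeTriple_linear]
    refine (mul_eq_zero.mp ?_).resolve_left hξ
    linear_combination w' 0 * h1 i - w 0 * h2 i
  have hw0 : w 0 = 0 := by simpa using (eq_zero_of_padeTriple_eq_zero hx0 hx1 h3).2
  have hw : w = 0 := by
    funext i
    simpa [hw0, hξ] using h1 i
  exact one_ne_zero (eq_zero_of_padeTriple_eq_zero hx0 hx1 hw).1

open Height Height.AdmissibleAbsValues Real

variable [AdmissibleAbsValues K]

/-- The gap principle for zero-sum triples: `y` and `x ^ (2 * N + 1)` are far apart. -/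
theorem logHeight_zeroSumTriple_le (N : ℕ) {x y : K} (hx0 : x ≠ 0) (hx1 : x ≠ 1) :
    N * logHeight (zeroSumTriple x) ≤
      logHeight (fun i ↦ zeroSumTriple y i / zeroSumTriple x i ^ (2 * N + 1)) +
      totalWeight K * log (4 * 4 ^ N * Nat.lcmUpto (3 * N + 2)) := by
  set d := Nat.lcmUpto (3 * N + 2) with hd
  have hdpos : (0 : ℝ) < d := Nat.cast_pos.mpr (Nat.lcmUpto_pos _)
  set e := zeroSumTriple x with he
  have he0 := zeroSumTriple_apply_ne_zero hx0 hx1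
  set ξ : Fin 3 → K := fun i ↦ zeroSumTriple y i / e i ^ (2 * N + 1) with hξ
  have hξ0 : ξ 0 ≠ 0 := by simp [hξ, he, zeroSumTriple]
  have hξsum : ∑ i, e i ^ (2 * N + 1) * ξ i = 0 := by
    have : ∀ i, e i ^ (2 * N + 1) * ξ i = zeroSumTriple y i := fun i ↦
      mul_div_cancel₀ _ (pow_ne_zero _ (he0 i))
    simp only [this, Fin.sum_univ_three]
    simp [zeroSumTriple]
  obtain ⟨p, q, hpq, hcross⟩ := exists_padeTriple_not_proportional (N := N) hx0 hx1 hξ0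
  have hwsum := sum_zeroSumTriple_pow_mul_padeTriple N x p q
  set w := padeTriple N x p q with hw
  set c : Fin 3 → K := crossProduct ξ w with hc
  have hcexp : c = ![ξ 1 * w 2 - ξ 2 * w 1, ξ 2 * w 0 - ξ 0 * w 2, ξ 0 * w 1 - ξ 1 * w 0] :=
    cross_apply ξ w
  have he_zero : e 0 = 1 := rfl
  have hce : c = c 0 • (e ^ (2 * N + 1)) := by
    rw [Fin.sum_univ_three] at hξsum hwsum
    rw [← he] at hwsum
    simp only [he_zero, one_pow, one_mul] at hξsum hwsum
    funext i
    rw [Pi.smul_apply, Pi.pow_apply, smul_eq_mul, hcexp]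
    fin_cases i <;> simp [he_zero]
    · linear_combination ξ 2 * hwsum - w 2 * hξsum
    · linear_combination w 1 * hξsum - ξ 1 * hwsum
  have hc0 : c 0 ≠ 0 := fun h ↦ hcross (by rw [hce, h, zero_smul])
  have hheight : mulHeight c = mulHeight e ^ (2 * N + 1) := by
    rw [hce, mulHeight_smul_eq_mulHeight _ hc0, mulHeight_pow]
  have hene : e ≠ 0 := fun h ↦ he0 0 (congrFun h 0)
  have hξne : ξ ≠ 0 := fun h ↦ hξ0 (congrFun h 0)
  have heN : e ^ (N + 1) ≠ 0 := pow_ne_zero _ hene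
  -- local bounds for the approximation triple
  have hcoef (v : AbsoluteValue K ℝ) {M : ℝ} (hM : ∀ i, v (e i) ≤ M) :
      1 ≤ M ∧ v (x - 1) ≤ M ∧ v x ≤ M :=
    ⟨by simpa [he, zeroSumTriple] using hM 0, by simpa [he, zeroSumTriple] using hM 1,
      by simpa [he, zeroSumTriple] using hM 2⟩
  have hwnon (v : AbsoluteValue K ℝ) (hv : IsNonarchimedean v) {M : ℝ} (hM : ∀ i, v (e i) ≤ M)
      (i : Fin 3) : v (w i) ≤ M ^ (N + 1) := by
    obtain ⟨h1, h2, h3⟩ := hcoef v hM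
    have h0 : 0 ≤ M := zero_le_one.trans h1
    fin_cases i <;> refine abv_lcmUpto_mul_padeForm_le_of_isNonarchimedean hv N ?_ ?_ ?_ ?_ <;>
      obtain ⟨rfl, rfl⟩ | ⟨rfl, rfl⟩ := hpq <;> simp [h0, h1, h2, h3]
  have hwarch (v : AbsoluteValue K ℝ) {M : ℝ} (hM : ∀ i, v (e i) ≤ M)
      (i : Fin 3) : v (w i) ≤ (2 * 4 ^ N * d) * M ^ (N + 1) := by
    obtain ⟨h1, h2, h3⟩ := hcoef v hM
    have h0 : 0 ≤ M := zero_le_one.trans h1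
    fin_cases i <;> refine abv_lcmUpto_mul_padeForm_le v N ?_ ?_ ?_ ?_ <;>
      obtain ⟨rfl, rfl⟩ | ⟨rfl, rfl⟩ := hpq <;> simp [h0, h1, h2, h3]
  have hterm (v : AbsoluteValue K ℝ) {i₀ : Fin 3} {C₀ : ℝ} (hC : 0 ≤ C₀)
      (h : ∀ i, v (w i) ≤ C₀ * v (e i₀) ^ (N + 1)) (j k : Fin 3) :
      v (ξ j * w k) ≤ C₀ * ⨆ a : Fin 3 × Fin 3, v ((e ^ (N + 1)) a.1 * ξ a.2) := by
    calc v (ξ j * w k) ≤ C₀ * v ((e ^ (N + 1)) i₀ * ξ j) := by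
          rw [map_mul, map_mul, Pi.pow_apply, map_pow, mul_comm, ← mul_assoc]
          gcongr
          exact h k
      _ ≤ _ := by
          gcongr
          exact Finite.le_ciSup (fun a : Fin 3 × Fin 3 ↦ v ((e ^ (N + 1)) a.1 * ξ a.2)) (i₀, j)
  have hprod : (fun a : Fin 3 × Fin 3 ↦ (e ^ (N + 1)) a.1 * ξ a.2) ≠ 0 := fun h ↦ by
    have := congrFun h (0, 0)
    simp [he_zero, hξ0] at this
  have hle := mulHeight_le_of_iSup_le (y := c) (C := 4 * 4 ^ N * d) hprod hcross
    (fun v _ ↦ by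
      obtain ⟨i₀, hi₀⟩ := Finite.exists_max fun i ↦ v (e i)
      have ht := hterm v (by positivity) (hwarch v hi₀)
      have hsub (j k j' k' : Fin 3) := (v.sub_le_add (ξ j * w k) (ξ j' * w k')).trans
        (add_le_add (ht j k) (ht j' k'))
      refine ciSup_le fun i ↦ ?_
      rw [show (4 : ℝ) * 4 ^ N * d = 2 * 4 ^ N * d + 2 * 4 ^ N * d by ring, add_mul, hcexp]
      fin_cases i <;> exact hsub ..)
    (fun v hv ↦ by
      have hv := isNonarchimedean v hv
      obtain ⟨i₀, hi₀⟩ := Finite.exists_max fun i ↦ v (e i)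
      have ht := hterm v zero_le_one (by simpa using hwnon v hv hi₀)
      simp only [one_mul] at ht
      have hsub (j k j' k' : Fin 3) : v (ξ j * w k - ξ j' * w k') ≤
          ⨆ a : Fin 3 × Fin 3, v ((e ^ (N + 1)) a.1 * ξ a.2) := by
        rw [sub_eq_add_neg]
        exact (hv _ _).trans (max_le (ht j k) (by rw [v.map_neg]; exact ht j' k'))
      refine ciSup_le fun i ↦ ?_
      rw [hcexp]
      fin_cases i <;> exact hsub ..)
  rw [hheight, mulHeight_fun_mul_eq heN hξne, mulHeight_pow] at hle
  have hlog := log_le_log (by positivity) hle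
  rw [log_mul (by positivity) (by positivity), log_mul (by positivity) (by positivity), log_pow,
    log_pow, log_pow] at hlog
  simp only [logHeight_eq_log_mulHeight]
  push_cast at hlog
  linarith

end HeightGap

section GapPrinciple

/-- Among infinitely many vectors tending to infinity in a finite-dimensional space, two are almost
parallel and of very different lengths. -/
theorem exists_almost_parallel {X V : Type*} [NormedAddCommGroup V] [NormedSpace ℝ V]
    [FiniteDimensional ℝ V] {s : Set X} (hs : s.Infinite) {l : X → V}
    (hfin : ∀ B : ℝ, {x ∈ s | ‖l x‖ ≤ B}.Finite) {ε : ℝ} (hε : 0 < ε) (R : ℝ) :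
    ∃ e ∈ s, ∃ f ∈ s, R < ‖l e‖ ∧ R * ‖l e‖ < ‖l f‖ ∧
      ‖‖l f‖⁻¹ • l f - ‖l e‖⁻¹ • l e‖ ≤ ε := by
  have : ProperSpace V := FiniteDimensional.proper ℝ V
  obtain ⟨t, ht, hcover⟩ := Metric.totallyBounded_iff.mp
    (isCompact_closedBall (0 : V) 1).totallyBounded (ε / 2) (half_pos hε)
  obtain ⟨y, -, hy⟩ : ∃ y ∈ t, {x ∈ s | ‖l x‖⁻¹ • l x ∈ Metric.ball y (ε / 2)}.Infinite := by
    by_contra! H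
    refine hs ((ht.biUnion fun y hy ↦ H y hy).subset fun x hx ↦ ?_)
    have hmem : ‖l x‖⁻¹ • l x ∈ Metric.closedBall (0 : V) 1 := by
      rw [mem_closedBall_zero_iff, norm_smul, norm_inv, norm_norm]
      exact inv_mul_le_one
    obtain ⟨y, hyt, hy⟩ := Set.mem_iUnion₂.mp (hcover hmem)
    exact Set.mem_iUnion₂.mpr ⟨y, hyt, hx, hy⟩
  obtain ⟨e, ⟨hes, hey⟩, he⟩ := (hy.sdiff (hfin R)).nonempty
  obtain ⟨f, ⟨hfs, hfy⟩, hf⟩ := (hy.sdiff (hfin (R * ‖l e‖))).nonempty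
  refine ⟨e, hes, f, hfs, not_le.mp fun h ↦ he ⟨hes, h⟩, not_le.mp fun h ↦ hf ⟨hfs, h⟩, ?_⟩
  rw [← dist_eq_norm]
  have h1 := Metric.mem_ball.mp hey
  have h2 := Metric.mem_ball.mp hfy
  linarith [dist_triangle_right (‖l f‖⁻¹ • l f) (‖l e‖⁻¹ • l e) y]

/-- A set on which a height satisfies the Northcott property and a gap principle is finite. -/
theorem finite_of_gap_principle {X V : Type*} [NormedAddCommGroup V] [NormedSpace ℝ V]
    [FiniteDimensional ℝ V] {s : Set X} {l : X → V} {h : X → ℝ} {A c : ℝ} (hA : 0 < A)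
    (hc : 0 ≤ c) (hlh : ∀ x ∈ s, ‖l x‖ ≤ h x) (hhl : ∀ x ∈ s, h x ≤ A * ‖l x‖)
    (hfin : ∀ B : ℝ, {x ∈ s | h x ≤ B}.Finite)
    (hgap : ∀ e ∈ s, ∀ f ∈ s, ∀ N : ℕ,
      N * h e ≤ A * ‖l f - (2 * N + 1 : ℝ) • l e‖ + c * (N + 1)) : s.Finite := by
  by_contra hs
  have hfin' (B : ℝ) : {x ∈ s | ‖l x‖ ≤ B}.Finite :=
    (hfin (A * B)).subset fun x hx ↦ ⟨hx.1, (hhl x hx.1).trans (by gcongr; exact hx.2)⟩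
  obtain ⟨e, he, f, hf, hR, hRt, hpar⟩ := exists_almost_parallel hs hfin'
    (show 0 < 1 / (20 * A) by positivity) (16 * A + 8 * c + 6)
  have he0 : 0 < ‖l e‖ := lt_trans (by positivity) hR
  have hf0 : 0 < ‖l f‖ := lt_trans (by positivity) hRt
  obtain ⟨t, ht⟩ : ∃ t, t * ‖l e‖ = ‖l f‖ := ⟨‖l f‖ / ‖l e‖, div_mul_cancel₀ _ he0.ne'⟩
  have htR : 16 * A + 8 * c + 6 < t := by
    rw [← ht] at hRt
    exact lt_of_mul_lt_mul_right hRt he0.le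
  obtain ⟨N, hN⟩ : ∃ N : ℕ, N = ⌊(t - 1) / 2⌋₊ := ⟨_, rfl⟩
  have hN1 : (N : ℝ) ≤ (t - 1) / 2 := hN ▸ Nat.floor_le (by linarith)
  have hN2 : (t - 1) / 2 < N + 1 := hN ▸ Nat.lt_floor_add_one _
  have hnorm : ‖l f - (2 * N + 1 : ℝ) • l e‖ ≤ (t * (1 / (20 * A)) + 2) * ‖l e‖ := by
    have : l f - (2 * N + 1 : ℝ) • l e = ‖l f‖ • (‖l f‖⁻¹ • l f - ‖l e‖⁻¹ • l e) +
        (t - (2 * N + 1)) • l e := by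
      rw [smul_sub, smul_inv_smul₀ hf0.ne', smul_smul, ← ht, mul_assoc, mul_inv_cancel₀ he0.ne',
        mul_one, sub_smul]
      abel
    rw [this]
    refine (norm_add_le _ _).trans ?_
    rw [norm_smul, norm_smul, norm_norm, Real.norm_of_nonneg (by linarith), ← ht, add_mul,
      mul_right_comm]
    have : t * ‖l e‖ * ‖‖l f‖⁻¹ • l f - ‖l e‖⁻¹ • l e‖ ≤ t * ‖l e‖ * (1 / (20 * A)) := by
      gcongr
      linarith
    rw [← ht] at this
    have h2 : (t - (2 * N + 1)) * ‖l e‖ ≤ 2 * ‖l e‖ := by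
      gcongr
      linarith
    linarith
  have hmain := (hgap e he f hf N).trans
    (add_le_add_left (mul_le_mul_of_nonneg_left hnorm hA.le) _)
  have hAt : A * ((t * (1 / (20 * A)) + 2) * ‖l e‖) = (t / 20 + 2 * A) * ‖l e‖ := by
    field_simp
  rw [hAt] at hmain
  have hhe := hlh e he
  have hN8 : 8 * A + 1 < N := by linarith
  have h1 : (t / 20 + 2 * A) * ‖l e‖ ≤ (N / 2) * h e := by
    gcongr
    linarith
  have h2 : c * (N + 1) ≤ h e / 8 * (2 * N) := by
    gcongr <;> linarith
  nlinarith

end GapPrinciple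

section UnitEquation

open Height Height.AdmissibleAbsValues Real

theorem log_four_mul_lcmUpto_le (N : ℕ) :
    log (4 * 4 ^ N * Nat.lcmUpto (3 * N + 2)) ≤ (4 * log 4 + 12) * (N + 1) := by
  have hpos : (0 : ℝ) < Nat.lcmUpto (3 * N + 2) := Nat.cast_pos.mpr (Nat.lcmUpto_pos _)
  have h := Chebyshev.psi_le_const_mul_self (x := ((3 * N + 2 : ℕ) : ℝ)) (by positivity)
  rw [Chebyshev.psi_eq_log_lcmUpto] at h
  rw [log_mul (by positivity) (by positivity), log_mul (by positivity) (by positivity), log_pow]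
  push_cast at h ⊢
  have : 0 ≤ log 4 := log_nonneg (by norm_num)
  nlinarith

variable {K : Type*} [Field K] [NumberField K]

theorem logHeight₁_zeroSumTriple_apply_le (x : K) (i : Fin 3) :
    logHeight₁ (zeroSumTriple x i) ≤ logHeight (zeroSumTriple x) := by
  rw [logHeight₁_eq_logHeight]
  have : ![zeroSumTriple x i, 1] = zeroSumTriple x ∘ ![i, 0] := by
    funext j
    fin_cases j <;> simp [zeroSumTriple]
  rw [this]
  exact logHeight_comp_le _ _

/-- The finiteness of the solutions of the unit equation in a number field. -/
theorem finite_setOf_unit_equation (T : Finset (AbsoluteValue K ℝ))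
    (hT : ∀ v ∈ T, v ∈ nonarchAbsVal (K := K)) :
    {x : K | x ≠ 0 ∧ x ≠ 1 ∧
      ∀ v ∈ nonarchAbsVal (K := K), v ∉ T → v x = 1 ∧ v (x - 1) = 1}.Finite := by
  classical
  set s := {x : K | x ≠ 0 ∧ x ≠ 1 ∧
      ∀ v ∈ nonarchAbsVal (K := K), v ∉ T → v x = 1 ∧ v (x - 1) = 1}
  let W : Finset (AbsoluteValue K ℝ) := (archAbsVal (K := K)).toFinset ∪ T
  have hW {v : AbsoluteValue K ℝ} (hv : v ∈ W) :
      v ∈ archAbsVal (K := K) ∨ v ∈ nonarchAbsVal (K := K) := by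
    rcases Finset.mem_union.mp hv with h | h
    · exact .inl (Multiset.mem_toFinset.mp h)
    · exact .inr (hT v h)
  let l : K → (W × Fin 3 → ℝ) := fun x a ↦ log (a.1.1 (zeroSumTriple x a.2))
  have hunit {x : K} (hx : x ∈ s) {v : AbsoluteValue K ℝ} (hv : v ∈ nonarchAbsVal (K := K))
      (hvT : v ∉ T) (i : Fin 3) : v (zeroSumTriple x i) = 1 := by
    obtain ⟨h1, h2⟩ := hx.2.2 v hv hvT
    fin_cases i <;> simp [zeroSumTriple, h1, h2]
  have hbound {z : Fin 3 → K} (hz : ∀ i, z i ≠ 0)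
      (hzu : ∀ v ∈ nonarchAbsVal (K := K), v ∉ T → ∀ i, v (z i) = 1)
      {g : W × Fin 3 → ℝ} (hg : ∀ a, log (a.1.1 (z a.2)) = g a) :
      logHeight z ≤ (totalWeight K + T.card) * ‖g‖ := by
    have hle {v : AbsoluteValue K ℝ} (hv : v ∈ W) (i : Fin 3) : log (v (z i)) ≤ ‖g‖ := by
      rw [hg (⟨v, hv⟩, i)]
      exact (le_abs_self _).trans (norm_le_pi_norm g _)
    exact logHeight_le_of_log_abv_le T hz hzu (norm_nonneg _)
      (fun v hv ↦ hle (Finset.mem_union_left _ (Multiset.mem_toFinset.mpr hv)))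
      (fun v hv ↦ hle (Finset.mem_union_right _ hv))
  have htw : (0 : ℝ) < totalWeight K := Nat.cast_pos.mpr (NumberField.totalWeight_pos K)
  have hlog4 : 0 ≤ log 4 := log_nonneg (by norm_num)
  refine finite_of_gap_principle (l := l) (h := fun x ↦ logHeight (zeroSumTriple x))
    (A := totalWeight K + T.card) (c := totalWeight K * (4 * log 4 + 12)) (by positivity)
    (by positivity) ?_ ?_ ?_ ?_
  · intro x hx
    exact (pi_norm_le_iff_of_nonneg (logHeight_nonneg _)).mpr fun a ↦
      (abs_log_abv_le_logHeight₁ (hW a.1.2) (zeroSumTriple_apply_ne_zero hx.1 hx.2.1 a.2)).trans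
        (logHeight₁_zeroSumTriple_apply_le x a.2)
  · exact fun x hx ↦ hbound (zeroSumTriple_apply_ne_zero hx.1 hx.2.1)
      (fun v hv hvT ↦ hunit hx hv hvT) fun _ ↦ rfl
  · intro B
    refine (NumberField.finite_setOfPred_logHeight₁_le K B).subset fun x hx ↦ ?_
    have := logHeight₁_zeroSumTriple_apply_le x 2
    rw [show zeroSumTriple x 2 = -x from rfl, logHeight₁_neg] at this
    exact this.trans hx.2
  · intro e he f hf N
    have hgap := logHeight_zeroSumTriple_le N (y := f) he.1 he.2.1
    have he0 := zeroSumTriple_apply_ne_zero he.1 he.2.1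
    have hf0 := zeroSumTriple_apply_ne_zero hf.1 hf.2.1
    have hξ : logHeight (fun i ↦ zeroSumTriple f i / zeroSumTriple e i ^ (2 * N + 1)) ≤
        (totalWeight K + T.card) * ‖l f - (2 * N + 1 : ℝ) • l e‖ := by
      refine hbound (fun i ↦ div_ne_zero (hf0 i) (pow_ne_zero _ (he0 i))) (fun v hv hvT i ↦ ?_)
        fun a ↦ ?_
      · rw [map_div₀, map_pow, hunit hf hv hvT, hunit he hv hvT, one_pow, div_one]
      · rw [map_div₀, map_pow, log_div (a.1.1.ne_zero (hf0 _))
          (pow_ne_zero _ (a.1.1.ne_zero (he0 _))), log_pow]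
        simp [l]
    refine hgap.trans (add_le_add hξ ?_)
    rw [mul_assoc (totalWeight K : ℝ)]
    exact mul_le_mul_of_nonneg_left (log_four_mul_lcmUpto_le N) htw.le

end UnitEquation

section SquareSums

open Height Height.AdmissibleAbsValues

/-- If all elements of a set of units are squares, so are all elements of the subgroup it
generates. -/
theorem isSquare_map_of_mem_closure {G H : Type*} [Group G] [CommGroup H] (φ : G →* H) {s : Set G}
    (hs : ∀ g ∈ s, IsSquare (φ g)) {u : G} (hu : u ∈ Subgroup.closure s) : IsSquare (φ u) := by
  induction hu using Subgroup.closure_induction with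
  | mem g hg => exact hs g hg
  | one => simp
  | mul g h _ _ hg hh => rw [map_mul]; exact hg.mul hh
  | inv g _ hg => rw [map_inv]; exact hg.inv

theorem map_eq_one_of_mem_closure {L : Type*} [Field L] (v : AbsoluteValue L ℝ) {s : Set Lˣ}
    (hs : ∀ g ∈ s, v g = 1) {u : Lˣ} (hu : u ∈ Subgroup.closure s) : v u = 1 := by
  induction hu using Subgroup.closure_induction with
  | mem g hg => exact hs g hg
  | one => simp
  | mul g h _ _ hg hh => rw [Units.val_mul, map_mul, hg, hh, one_mul]
  | inv g _ hg => rw [Units.val_inv_eq_inv_val, map_inv₀, hg, inv_one]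

/-- Over a number field where all `u ∈ Γ` are squares, with `Γ` a finitely generated group of units,
there are finitely many ratios `u / v` with `u, v ∈ Γ` and `u + v` a square. -/
theorem finite_setOf_ratio_of_isSquare {L : Type*} [Field L] [NumberField L] {G : Set Lˣ}
    (hG : G.Finite) (hsq : ∀ g ∈ G, IsSquare g) :
    {w : L | ∃ u ∈ Subgroup.closure G, ∃ v ∈ Subgroup.closure G,
      IsSquare (u + v : L) ∧ w = u / v}.Finite := by
  classical
  have hfin : {v ∈ nonarchAbsVal (K := L) | v 2 ≠ 1 ∨ ∃ g ∈ G, v g ≠ 1}.Finite := by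
    have hx {x : L} (hx : x ≠ 0) : {v ∈ nonarchAbsVal (K := L) | v x ≠ 1}.Finite := by
      have := (hasFiniteMulSupport hx).image Subtype.val
      refine this.subset fun v hv ↦ ⟨⟨v, hv.1⟩, hv.2, rfl⟩
    refine ((hx two_ne_zero).union (hG.biUnion fun g _ ↦ hx g.ne_zero)).subset ?_
    rintro v ⟨hv, h | ⟨g, hg, h⟩⟩
    · exact .inl ⟨hv, h⟩
    · exact .inr (Set.mem_iUnion₂.mpr ⟨g, hg, hv, h⟩)
  have hX := finite_setOf_unit_equation hfin.toFinset fun v hv ↦ (hfin.mem_toFinset.mp hv).1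
  refine (hX.image fun X ↦ ((2 * X - 1) ^ 2 - 1)⁻¹).subset ?_
  rintro w ⟨u, hu, v, hv, ⟨y, hy⟩, rfl⟩
  obtain ⟨β, rfl⟩ := isSquare_map_of_mem_closure (MonoidHom.id _) hsq hu
  simp only [Units.val_mul] at hu hy ⊢
  have hβ : (β : L) ≠ 0 := β.ne_zero
  have hprod : (y + β) * (y - β) = v := by linear_combination -hy
  have hplus : y + β ≠ 0 := left_ne_zero_of_mul (hprod ▸ v.ne_zero)
  have hminus : y - β ≠ 0 := right_ne_zero_of_mul (hprod ▸ v.ne_zero)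
  have hsub : (y + β) / (2 * β) - 1 = (y - β) / (2 * β) := by field_simp; ring
  refine ⟨(y + β) / (2 * β), ⟨div_ne_zero hplus (by simp), ?_, fun p hp hpT ↦ ?_⟩, ?_⟩
  · rw [← sub_ne_zero, hsub]
    exact div_ne_zero hminus (by simp)
  · have hgood : p 2 = 1 ∧ ∀ g ∈ G, p g = 1 := by
      simpa [hp] using hpT
    have hnon := isNonarchimedean p hp
    have hpu := map_eq_one_of_mem_closure p hgood.2 hu
    have hpv := map_eq_one_of_mem_closure p hgood.2 hv
    have hpβ : p β = 1 := by
      rw [Units.val_mul, map_mul, ← pow_two] at hpu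
      exact (pow_eq_one_iff_of_nonneg (p.nonneg _) two_ne_zero).mp hpu
    have hpy : p y ≤ 1 := by
      have : p (y * y) ≤ 1 := by
        rw [← hy]
        refine (hnon _ _).trans (max_le ?_ hpv.le)
        rw [map_mul, hpβ, one_mul]
      rw [map_mul, ← pow_two] at this
      exact (pow_le_one_iff_of_nonneg (p.nonneg _) two_ne_zero).mp this
    have h1 : p (y + β) ≤ 1 := (hnon _ _).trans (max_le hpy hpβ.le)
    have h2 : p (y - β) ≤ 1 := by
      rw [sub_eq_add_neg]
      exact (hnon _ _).trans (max_le hpy (by rw [p.map_neg, hpβ]))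
    have h12 : p (y + β) * p (y - β) = 1 := by rw [← map_mul, hprod, hpv]
    have h3 : p (y + β) = 1 := by nlinarith [p.nonneg (y + β), p.nonneg (y - β)]
    have h4 : p (y - β) = 1 := by rwa [h3, one_mul] at h12
    rw [hsub, map_div₀, map_div₀, map_mul, hgood.1, hpβ, h3, h4]
    simp
  · have : (2 * ((y + β) / (2 * β)) - 1) ^ 2 - 1 = v / (β * β) := by
      rw [← hprod]
      field_simp
      ring
    simp only [this, inv_div]

/-- For a finitely generated group `Γ` of units of a number field, there are finitely many ratios
`u / v` with `u, v ∈ Γ` and `u + v` a square. -/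
theorem finite_setOf_ratio_of_isSquare_add {K : Type*} [Field K] [NumberField K] {G : Set Kˣ}
    (hG : G.Finite) :
    {w : K | ∃ u ∈ Subgroup.closure G, ∃ v ∈ Subgroup.closure G,
      IsSquare (u + v : K) ∧ w = u / v}.Finite := by
  classical
  let P : Polynomial K := ∏ g ∈ hG.toFinset, (.X ^ 2 - .C (g : K))
  let L := P.SplittingField
  have : NumberField L := NumberField.of_module_finite K L
  let φ : Kˣ →* Lˣ := Units.map (algebraMap K L : K →* L)
  have hsq : ∀ g ∈ φ '' G, IsSquare g := by
    rintro _ ⟨g, hg, rfl⟩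
    have hP : P ≠ 0 := Finset.prod_ne_zero_iff.mpr fun g _ ↦
      Polynomial.X_pow_sub_C_ne_zero two_pos _
    have hsplit : ((Polynomial.X ^ 2 - Polynomial.C (g : K)).map (algebraMap K L)).Splits := by
      refine (Polynomial.SplittingField.splits P).of_dvd (Polynomial.map_ne_zero hP) ?_
      exact Polynomial.map_dvd _ (Finset.dvd_prod_of_mem _ (hG.mem_toFinset.mpr hg))
    obtain ⟨b, hb⟩ := hsplit.exists_eval_eq_zero (by
      rw [Polynomial.degree_map, Polynomial.degree_X_pow_sub_C two_pos]; decide)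
    have hb : b ^ 2 = algebraMap K L g := by simpa [sub_eq_zero] using hb
    have hb0 : b ≠ 0 := fun h ↦ (φ g).ne_zero (by simp [φ, ← hb, h])
    exact ⟨Units.mk0 b hb0, Units.ext (by simp [φ, ← hb, pow_two])⟩
  refine .of_finite_image ((finite_setOf_ratio_of_isSquare (hG.image φ) hsq).subset ?_)
    (algebraMap K L).injective.injOn
  rintro _ ⟨_, ⟨u, hu, v, hv, hy, rfl⟩, rfl⟩
  rw [← MonoidHom.map_closure]
  exact ⟨φ u, ⟨u, hu, rfl⟩, φ v, ⟨v, hv, rfl⟩,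
    by simpa [φ] using hy.map (algebraMap K L), by simp [φ]⟩

end SquareSums

section SUnits

open NumberField IsDedekindDomain

theorem fg_unit_of_finite {K : Type*} [Field K] [NumberField K]
    (S : Finset (HeightOneSpectrum (𝓞 K))) :
    ((S : Set (HeightOneSpectrum (𝓞 K))).unit K).FG := by
  let f : Additive Kˣ →ₗ[ℤ] (S → ℤ) := (AddMonoidHom.pi fun p : S ↦
    (p.1.valuationOfNeZero (K := K)).toAdditiveLeft).toIntLinearMap
  let g : Additive (𝓞 K)ˣ →ₗ[ℤ] Additive Kˣ :=
    (MonoidHom.toAdditive (Units.map (algebraMap (𝓞 K) K : 𝓞 K →* K))).toIntLinearMap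
  let U : Submodule ℤ (Additive Kˣ) := AddSubgroup.toIntSubmodule
    (Subgroup.toAddSubgroup ((S : Set (HeightOneSpectrum (𝓞 K))).unit K))
  suffices U.FG by
    rwa [Submodule.fg_iff_addSubgroup_fg, AddSubgroup.toIntSubmodule_toAddSubgroup,
      ← Subgroup.fg_iff_add_fg] at this
  refine Submodule.fg_of_fg_map_of_fg_inf_ker f (IsNoetherian.noetherian _) ?_
  refine Submodule.FG.of_le (Module.Finite.fg_top.map g) ?_
  rintro x ⟨hx, hker⟩
  have hval (p : HeightOneSpectrum (𝓞 K)) : p.valuation K (x.toMul : K) = 1 := by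
    by_cases hp : p ∈ S
    · rw [← HeightOneSpectrum.valuationOfNeZero_eq]
      have : p.valuationOfNeZero x.toMul = 1 := congrFun (LinearMap.mem_ker.mp hker) ⟨p, hp⟩
      simp [this]
    · exact hx p hp
  obtain ⟨a, ha⟩ := HeightOneSpectrum.mem_integers_of_valuation_le_one K (x.toMul : K)
    fun p ↦ (hval p).le
  obtain ⟨b, hb⟩ := HeightOneSpectrum.mem_integers_of_valuation_le_one K (x.toMul⁻¹ : K)
    fun p ↦ by rw [map_inv₀, hval, inv_one]
  have hab : a * b = 1 := by
    apply FaithfulSMul.algebraMap_injective (𝓞 K) K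
    rw [map_mul, ha, hb, map_one, mul_inv_cancel₀ (Units.ne_zero _)]
  refine ⟨Additive.ofMul (Units.mkOfMulEqOne a b hab), trivial, ?_⟩
  exact Additive.toMul.injective (Units.ext ha)

end SUnits

open IsDedekindDomain

/-- for fixed `D, E ∈ K^*`, the set of ratios `u/v` of `S`-units `u, v` such that
`y² = D·u + E·v` for some `S`-integer `y` is finite. -/
theorem finite_unit_ratios {K : Type*} [Field K] [NumberField K]
    (S : Finset (HeightOneSpectrum (NumberField.RingOfIntegers K)))
    (D E : K) (hD : D ≠ 0) (hE : E ≠ 0) :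
    {w : K | ∃ u v : Kˣ,
        u ∈ (S : Set (HeightOneSpectrum (NumberField.RingOfIntegers K))).unit K ∧
        v ∈ (S : Set (HeightOneSpectrum (NumberField.RingOfIntegers K))).unit K ∧
        (∃ y ∈ (S : Set (HeightOneSpectrum (NumberField.RingOfIntegers K))).integer K,
          y ^ 2 = D * u + E * v) ∧
        w = (u : K) / (v : K)}.Finite := by
  obtain ⟨G, hG⟩ := fg_unit_of_finite S
  have hfin := finite_setOf_ratio_of_isSquare_add
    (G.finite_toSet.union (Set.toFinite {Units.mk0 D hD, Units.mk0 E hE}))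
  refine (hfin.image fun w ↦ w * (E / D)).subset ?_
  rintro _ ⟨u, v, hu, hv, ⟨y, -, hy⟩, rfl⟩
  rw [← hG] at hu hv
  have hmono := Subgroup.closure_mono
    (Set.subset_union_left (s := (G : Set Kˣ)) (t := {Units.mk0 D hD, Units.mk0 E hE}))
  refine ⟨D * u / (E * v), ⟨Units.mk0 D hD * u,
    mul_mem (Subgroup.subset_closure (by simp)) (hmono hu),
    Units.mk0 E hE * v, mul_mem (Subgroup.subset_closure (by simp)) (hmono hv), ⟨y, ?_⟩, ?_⟩, ?_⟩
  · simp [← hy, pow_two]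
  · simp
  · have := v.ne_zero
    field_simp
end

section
/- Fix D, E ∈ K^*. The set of principal ideals { y·R_S : y ∈ R_S, and there exist u, v ∈ R_S^* with y² = D·u + E·v } is finite. -/
open IsDedekindDomain

set_option synthInstance.maxHeartbeats 400000

/-- The ring of `S`-integers of a number field `K`. -/
noncomputable abbrev sIntegers (K : Type*) [Field K] [NumberField K]
    (S : Finset (HeightOneSpectrum (NumberField.RingOfIntegers K))) :=
  ((S : Set (HeightOneSpectrum (NumberField.RingOfIntegers K))).integer K)

section Pade

open Polynomial
open scoped Nat

theorem integral_pow_mul_one_sub_pow_eq (p q : ℕ) :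
    ∫ t in (0 : ℝ)..1, t ^ p * (1 - t) ^ q = ((p ! : ℝ) * (q ! : ℝ)) / ((p + q + 1)! : ℝ) := by
  have h := Complex.Gamma_mul_Gamma_eq_betaIntegral (s := (p : ℂ) + 1) (t := (q : ℂ) + 1)
    (by simp; positivity) (by simp; positivity)
  rw [show (p : ℂ) + 1 + (q + 1) = ((p + q + 1 : ℕ) : ℂ) + 1 by push_cast; ring,
    Complex.Gamma_nat_eq_factorial, Complex.Gamma_nat_eq_factorial,
    Complex.Gamma_nat_eq_factorial] at h
  have hb : Complex.betaIntegral ((p : ℂ) + 1) ((q : ℂ) + 1) =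
      ((∫ t in (0 : ℝ)..1, t ^ p * (1 - t) ^ q : ℝ) : ℂ) := by
    rw [Complex.betaIntegral, ← intervalIntegral.integral_ofReal]
    simp [add_sub_cancel_right, Complex.cpow_natCast]
  rw [hb] at h
  rw [eq_div_iff (by positivity), mul_comm]
  exact_mod_cast h.symm

/-- The coefficient polynomial of `X ^ (a + n + 1)` in the Padé identity
`padeOuter_add_padeOuter_comp`: a scalar multiple of
`X ^ (-a - n - 1) * ∫ t in 0..X, t ^ a * (1 - t) ^ a * (X - t) ^ n`. -/
noncomputable def padeOuter (a n : ℕ) : ℤ[X] :=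
  ∑ i ∈ Finset.range (a + 1),
    C ((-1) ^ i * ((a + i).choose a : ℤ) * ((2 * a + n + 1).choose (a - i) : ℤ)) * X ^ i

/-- The right hand side of the Padé identity `padeOuter_add_padeOuter_comp`: a scalar multiple of
`∫ t in 0..1, t ^ a * (1 - t) ^ a * (X - t) ^ n`. -/
noncomputable def padeInner (a n : ℕ) : ℤ[X] :=
  ∑ j ∈ Finset.range (n + 1),
    C ((-1) ^ (n + j) * ((a + (n - j)).choose a : ℤ) * ((2 * a + n + 1).choose j : ℤ)) * X ^ j

/-- The factor that makes the integrals defining `padeOuter` and `padeInner` integral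
polynomials. -/
noncomputable def padeScale (a n : ℕ) : ℝ := ((2 * a + n + 1)! : ℝ) / (a ! * a ! * n ! : ℝ)

theorem padeScale_mul_integral_outer (a n : ℕ) (x : ℝ) :
    padeScale a n * ∫ t in (0 : ℝ)..x, t ^ a * (1 - t) ^ a * (x - t) ^ n =
      x ^ (a + n + 1) * aeval x (padeOuter a n) := by
  have h := intervalIntegral.mul_integral_comp_mul_left
    (f := fun t ↦ t ^ a * (1 - t) ^ a * (x - t) ^ n) (a := 0) (b := 1) (c := x)
  rw [mul_zero, mul_one] at h
  rw [← h]
  have hexp : ∀ s : ℝ, (x * s) ^ a * (1 - x * s) ^ a * (x - x * s) ^ n =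
      ∑ i ∈ Finset.range (a + 1),
        (x ^ (a + n) * ((-1) ^ i * x ^ i * a.choose i)) * (s ^ (a + i) * (1 - s) ^ n) := by
    intro s
    rw [show 1 - x * s = -(x * s) + 1 by ring, add_pow, Finset.mul_sum, Finset.sum_mul]
    refine Finset.sum_congr rfl fun i _ ↦ ?_
    rw [show x - x * s = x * (1 - s) by ring, neg_pow, mul_pow, mul_pow, mul_pow]
    ring
  simp_rw [hexp]
  rw [intervalIntegral.integral_finsetSum
    (fun i _ ↦ Continuous.intervalIntegrable (by fun_prop) _ _)]
  simp_rw [intervalIntegral.integral_const_mul, integral_pow_mul_one_sub_pow_eq]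
  simp only [padeOuter, map_sum, map_mul, map_pow, aeval_X, aeval_C, Finset.mul_sum]
  refine Finset.sum_congr rfl fun i hi ↦ ?_
  obtain ⟨d, rfl⟩ := Nat.exists_eq_add_of_le (Nat.lt_succ_iff.mp (Finset.mem_range.mp hi))
  rw [show 2 * (i + d) + n + 1 = d + (i + d + i + n + 1) by omega, show i + d - i = d by omega]
  simp only [padeScale, eq_intCast, Int.cast_natCast, Nat.cast_add_choose, Int.cast_neg,
    Int.cast_one, show 2 * (i + d) + n + 1 = d + (i + d + i + n + 1) by omega]
  field_simp
  ring

theorem padeScale_mul_integral_inner (a n : ℕ) (x : ℝ) :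
    padeScale a n * ∫ t in (0 : ℝ)..1, t ^ a * (1 - t) ^ a * (x - t) ^ n =
      aeval x (padeInner a n) := by
  have hexp : ∀ t : ℝ, t ^ a * (1 - t) ^ a * (x - t) ^ n =
      ∑ j ∈ Finset.range (n + 1),
        (x ^ j * ((-1) ^ (n - j) * n.choose j)) * (t ^ (a + (n - j)) * (1 - t) ^ a) := by
    intro t
    rw [show x - t = x + -t by ring, add_pow, Finset.mul_sum]
    refine Finset.sum_congr rfl fun j _ ↦ ?_
    rw [neg_pow]
    ring
  simp_rw [hexp]
  rw [intervalIntegral.integral_finsetSum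
    (fun i _ ↦ Continuous.intervalIntegrable (by fun_prop) _ _)]
  simp_rw [intervalIntegral.integral_const_mul, integral_pow_mul_one_sub_pow_eq]
  simp only [padeInner, map_sum, map_mul, map_pow, aeval_X, aeval_C, Finset.mul_sum]
  refine Finset.sum_congr rfl fun j hj ↦ ?_
  obtain ⟨d, rfl⟩ := Nat.exists_eq_add_of_le (Nat.lt_succ_iff.mp (Finset.mem_range.mp hj))
  rw [show j + d - j = d by omega]
  have hsign : (-1 : ℝ) ^ (j + d + j) = (-1) ^ d := by
    rw [show j + d + j = d + 2 * j by ring, pow_add, pow_mul]; simp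
  simp only [padeScale, eq_intCast, Int.cast_natCast, Nat.cast_add_choose, Int.cast_neg,
    Int.cast_one, show 2 * a + (j + d) + 1 = j + (a + d + a + 1) by omega, hsign]
  field_simp

/-- The binomial Padé identity for `x ^ m`, `(1 - x) ^ m` and `1` with `m = a + n + 1`. -/
theorem padeOuter_add_padeOuter_comp (a n : ℕ) :
    X ^ (a + n + 1) * padeOuter a n +
      (-1) ^ n * ((1 - X) ^ (a + n + 1) * (padeOuter a n).comp (1 - X)) = padeInner a n := by
  apply Polynomial.map_injective (Int.castRingHom ℝ) Int.cast_injective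
  refine Polynomial.funext fun x ↦ ?_
  have e (p : ℤ[X]) : eval x (p.map (Int.castRingHom ℝ)) = aeval x p := by
    rw [eval_map, aeval_def]; rfl
  have hsub : (-1) ^ n * ∫ t in (0 : ℝ)..(1 - x), t ^ a * (1 - t) ^ a * (1 - x - t) ^ n =
      ∫ t in x..1, t ^ a * (1 - t) ^ a * (x - t) ^ n := by
    have h := intervalIntegral.integral_comp_sub_left
      (f := fun t ↦ t ^ a * (1 - t) ^ a * (1 - x - t) ^ n) (a := x) (b := 1) (d := 1)
    rw [sub_self] at h
    rw [← h, ← intervalIntegral.integral_const_mul]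
    refine intervalIntegral.integral_congr fun t _ ↦ ?_
    rw [show x - t = -1 * (1 - x - (1 - t)) by ring, mul_pow (-1 : ℝ)]
    ring
  have hadd := intervalIntegral.integral_add_adjacent_intervals
    (Continuous.intervalIntegrable
      (show Continuous fun t : ℝ ↦ t ^ a * (1 - t) ^ a * (x - t) ^ n by fun_prop) 0 x)
    (Continuous.intervalIntegrable (by fun_prop) x 1) (μ := MeasureTheory.volume)
  rw [e, e, map_add, map_mul, map_mul, map_mul, map_pow, map_pow, map_pow, aeval_comp]
  simp only [map_neg, map_one, map_sub, aeval_X]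
  rw [← padeScale_mul_integral_outer, ← padeScale_mul_integral_outer,
    ← padeScale_mul_integral_inner, ← hadd, ← hsub]
  ring

theorem coeff_padeOuter (a n i : ℕ) : (padeOuter a n).coeff i = if i ≤ a then
    (-1) ^ i * ((a + i).choose a : ℤ) * ((2 * a + n + 1).choose (a - i) : ℤ) else 0 := by
  simp only [padeOuter, finsetSum_coeff, coeff_C_mul_X_pow]
  simp

theorem coeff_padeInner (a n j : ℕ) : (padeInner a n).coeff j = if j ≤ n then
    (-1) ^ (n + j) * ((a + (n - j)).choose a : ℤ) * ((2 * a + n + 1).choose j : ℤ) else 0 := by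
  simp only [padeInner, finsetSum_coeff, coeff_C_mul_X_pow]
  simp

theorem natDegree_padeOuter_le (a n : ℕ) : (padeOuter a n).natDegree ≤ a :=
  natDegree_le_iff_coeff_eq_zero.mpr fun i hi ↦ by simp [coeff_padeOuter, hi.not_ge]

theorem natDegree_padeInner_le (a n : ℕ) : (padeInner a n).natDegree ≤ n :=
  natDegree_le_iff_coeff_eq_zero.mpr fun i hi ↦ by simp [coeff_padeInner, hi.not_ge]

theorem abs_choose_mul_choose_le {p q r s t : ℕ} (hpr : p + r ≤ t) :
    |((p.choose q : ℤ) * (r.choose s : ℤ))| ≤ 2 ^ t := by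
  rw [← Nat.cast_mul, Nat.abs_cast]
  exact_mod_cast (Nat.mul_le_mul (Nat.choose_le_two_pow p q) (Nat.choose_le_two_pow r s)).trans
    (by rw [← pow_add]; exact Nat.pow_le_pow_right two_pos hpr)

theorem abs_coeff_padeOuter_le (a n i : ℕ) :
    |(padeOuter a n).coeff i| ≤ 2 ^ (4 * a + 2 * n + 1) := by
  rw [coeff_padeOuter]
  split_ifs with h
  · rw [mul_assoc, abs_mul, abs_neg_one_pow, one_mul]
    exact abs_choose_mul_choose_le (by omega)
  · simp

theorem abs_coeff_padeInner_le (a n j : ℕ) :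
    |(padeInner a n).coeff j| ≤ 2 ^ (4 * a + 2 * n + 1) := by
  rw [coeff_padeInner]
  split_ifs with h
  · rw [mul_assoc, abs_mul, abs_neg_one_pow, one_mul]
    exact abs_choose_mul_choose_le (by omega)
  · simp

/-- The nonvanishing minor of the two Padé approximations with exponent `2 * l + 2`. -/
theorem exists_pade_minor_eq (l : ℕ) : ∃ c : ℤ, c ≠ 0 ∧
    (-1) ^ (l + 1) * (padeOuter l (l + 1)).comp (1 - X) * padeInner (l + 1) l -
      (-1) ^ l * (padeOuter (l + 1) l).comp (1 - X) * padeInner l (l + 1) =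
      C c * X ^ (2 * l + 2) := by
  set D : ℤ[X] := (-1) ^ (l + 1) * (padeOuter l (l + 1)).comp (1 - X) * padeInner (l + 1) l -
      (-1) ^ l * (padeOuter (l + 1) l).comp (1 - X) * padeInner l (l + 1) with hD
  have h₁ := padeOuter_add_padeOuter_comp l (l + 1)
  have h₂ := padeOuter_add_padeOuter_comp (l + 1) l
  rw [show l + (l + 1) + 1 = 2 * l + 2 by ring] at h₁
  rw [show l + 1 + l + 1 = 2 * l + 2 by ring] at h₂
  have hdvd : (X : ℤ[X]) ^ (2 * l + 2) ∣ D := by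
    have hcop : IsCoprime ((X : ℤ[X]) ^ (2 * l + 2)) ((1 - X) ^ (2 * l + 2)) :=
      IsCoprime.pow ⟨1, 1, by ring⟩
    refine hcop.dvd_of_dvd_mul_left ⟨padeOuter (l + 1) l * padeInner l (l + 1) -
      padeOuter l (l + 1) * padeInner (l + 1) l, ?_⟩
    linear_combination padeInner (l + 1) l * h₁ - padeInner l (l + 1) * h₂
  have hlin : (1 - X : ℤ[X]).natDegree = 1 := by
    rw [← natDegree_neg, neg_sub]; exact natDegree_X_sub_C 1
  have hdeg₁ : ((padeOuter l (l + 1)).comp (1 - X)).natDegree ≤ l := by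
    rw [natDegree_comp, hlin, mul_one]; exact natDegree_padeOuter_le _ _
  have hdeg₂ : ((padeOuter (l + 1) l).comp (1 - X)).natDegree ≤ l + 1 := by
    rw [natDegree_comp, hlin, mul_one]; exact natDegree_padeOuter_le _ _
  have hsign (n : ℕ) : ((-1 : ℤ[X]) ^ n) = C ((-1) ^ n) := by simp
  have hcoeff : D.coeff (2 * l + 2) ≠ 0 := by
    have hP : (padeOuter (l + 1) l).coeff (l + 1) ≠ 0 := by
      rw [coeff_padeOuter, if_pos le_rfl]
      have := Nat.choose_pos (show l + 1 ≤ l + 1 + (l + 1) by omega)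
      simp [this.ne']
    have hPdeg : (padeOuter (l + 1) l).natDegree = l + 1 :=
      natDegree_eq_of_le_of_coeff_ne_zero (natDegree_padeOuter_le _ _) hP
    have hR : (padeInner l (l + 1)).coeff (l + 1) ≠ 0 := by
      rw [coeff_padeInner, if_pos le_rfl]
      have := Nat.choose_pos (show l + 1 ≤ 2 * l + (l + 1) + 1 by omega)
      simp [this.ne']
    have hPc : ((padeOuter (l + 1) l).comp (1 - X)).coeff (l + 1) ≠ 0 := by
      have h := coeff_comp_degree_mul_degree (p := padeOuter (l + 1) l) (q := 1 - X)
        (by rw [hlin]; exact one_ne_zero)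
      rw [hlin, mul_one, hPdeg] at h
      rw [h]
      refine mul_ne_zero ?_ (pow_ne_zero _ ?_)
      · rwa [leadingCoeff, hPdeg]
      · rw [leadingCoeff_ne_zero]
        intro h0
        rw [h0] at hlin
        simp at hlin
    rw [hD, coeff_sub, hsign, hsign, mul_assoc, mul_assoc, coeff_C_mul, coeff_C_mul,
      coeff_eq_zero_of_natDegree_lt, mul_zero, zero_sub, neg_ne_zero,
      show 2 * l + 2 = (l + 1) + (l + 1) by ring,
      coeff_mul_add_eq_of_natDegree_le hdeg₂ (natDegree_padeInner_le _ _)]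
    · exact mul_ne_zero (by simp) (mul_ne_zero hPc hR)
    · have := natDegree_mul_le_of_le hdeg₁ (natDegree_padeInner_le (l + 1) l)
      omega
  have hdegD : D.natDegree ≤ 2 * l + 2 := by
    rw [hD, hsign, hsign, mul_assoc, mul_assoc]
    refine (natDegree_sub_le _ _).trans (max_le ((natDegree_C_mul_le _ _).trans ?_)
      ((natDegree_C_mul_le _ _).trans ?_))
    · have := natDegree_mul_le_of_le hdeg₁ (natDegree_padeInner_le (l + 1) l)
      omega
    · have := natDegree_mul_le_of_le hdeg₂ (natDegree_padeInner_le l (l + 1))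
      omega
  obtain ⟨q, hq⟩ := hdvd
  have hq0 : q ≠ 0 := by
    rintro rfl
    simp [hq] at hcoeff
  have hqdeg : q.natDegree = 0 := by
    rw [hq, (monic_X_pow _).natDegree_mul' hq0, natDegree_X_pow] at hdegD
    omega
  refine ⟨q.coeff 0, ?_, ?_⟩
  · intro h0
    rw [eq_C_of_natDegree_eq_zero hqdeg, h0, C_0] at hq0
    exact hq0 rfl
  · rw [hq, mul_comm, ← eq_C_of_natDegree_eq_zero hqdeg]

section Heights

open Height AdmissibleAbsValues

variable {K : Type*} [Field K] [AdmissibleAbsValues K]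

theorem logHeight_intCast_le {ι : Type*} [Finite ι] (f : ι → ℤ) {B : ℝ} (hB : 1 ≤ B)
    (hf : ∀ i, |(f i : ℝ)| ≤ B) :
    logHeight (fun i ↦ (f i : K)) ≤ totalWeight K * Real.log B := by
  rw [logHeight_eq_log_mulHeight, ← Real.log_pow]
  refine Real.log_le_log (mulHeight_pos _) ?_
  rcases eq_or_ne (fun i ↦ (f i : K)) 0 with h0 | h0
  · rw [h0, mulHeight_zero]
    exact one_le_pow₀ hB
  have : Nonempty ι := by
    by_contra h
    rw [not_nonempty_iff] at h
    exact h0 (Subsingleton.elim _ _)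
  rw [mulHeight_eq h0]
  have harch : (archAbsVal.map fun v : AbsoluteValue K ℝ ↦ ⨆ i, v (f i : K)).prod ≤
      B ^ totalWeight K := by
    refine (Multiset.prod_map_le_prod_map₀ _ (fun _ ↦ B)
      (fun v _ ↦ Real.iSup_nonneg fun i ↦ apply_nonneg v _) fun v _ ↦ ?_).trans_eq
      (by rw [Multiset.map_const', Multiset.prod_replicate, totalWeight])
    refine ciSup_le fun i ↦ le_trans ?_ (hf i)
    rw [← v.apply_natAbs_eq, ← Int.cast_abs, Int.abs_eq_natAbs, Int.cast_natCast]
    exact v.apply_nat_le_self _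
  have hnon : ∏ᶠ v : nonarchAbsVal (K := K), ⨆ i, v.val (f i : K) ≤ 1 := by
    refine (finprod_induction (fun r : ℝ ↦ 0 ≤ r ∧ r ≤ 1) ⟨zero_le_one, le_rfl⟩
      (fun a b ha hb ↦ ⟨mul_nonneg ha.1 hb.1, mul_le_one₀ ha.2 hb.1 hb.2⟩) fun v ↦ ?_).2
    exact ⟨Real.iSup_nonneg fun i ↦ apply_nonneg v.val _,
      ciSup_le fun i ↦ (isNonarchimedean v.val v.2).apply_intCast_le_one⟩
  calc _ ≤ B ^ totalWeight K * 1 := by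
        gcongr
        exact finprod_nonneg fun v ↦ Real.iSup_nonneg fun i ↦ apply_nonneg _ _
    _ = _ := mul_one _

theorem logHeight_crossProduct_le {u w : Fin 3 → K} (hu : u ≠ 0) (hw : w ≠ 0) :
    logHeight (crossProduct u w) ≤ totalWeight K * Real.log 9 + logHeight u + logHeight w := by
  let M : Fin 3 × (Fin 3 × Fin 3) → ℤ := fun p ↦
    if p.2.2 = p.2.1 + 1 ∧ p.1 = p.2.1 + 2 then 1
    else if p.2.1 = p.2.2 + 1 ∧ p.1 = p.2.2 + 2 then -1 else 0
  have hM : logHeight (fun p ↦ (M p : K)) ≤ 0 := by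
    refine (logHeight_intCast_le M le_rfl fun p ↦ ?_).trans (by simp)
    dsimp only [M]
    split_ifs <;> simp
  have h := logHeight_linearMap_apply_le (fun p ↦ (M p : K))
    (fun a : Fin 3 × Fin 3 ↦ u a.1 * w a.2)
  rw [logHeight_fun_mul_eq hu hw] at h
  have hcross : (fun j ↦ ∑ i, (M (j, i) : K) * (u i.1 * w i.2)) = crossProduct u w := by
    funext j
    rw [cross_apply]
    fin_cases j <;> simp [M, Fintype.sum_prod_type, Fin.sum_univ_three] <;> ring
  rw [hcross] at h
  simp at h
  linarith

theorem logHeight_pow_pow_le (x y : K) (k : ℕ) :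
    logHeight (fun p : Fin 2 × Fin (k + 1) ↦ ![x, y] p.1 ^ (p.2 : ℕ)) ≤
      k * logHeight ![x, y, 1] := by
  have hne : (![x, y, 1] : Fin 3 → K) ≠ 0 := fun h ↦ one_ne_zero (congrFun h 2)
  have h := logHeight_fun_prod_eq (K := K) (α := Fin k) (ι := fun _ ↦ Fin 3)
    (x := fun _ ↦ ![x, y, 1]) (fun _ ↦ hne)
  rw [Finset.sum_const, Finset.card_univ, Fintype.card_fin, nsmul_eq_mul] at h
  rw [← h]
  let sel : Fin 2 × Fin (k + 1) → (Fin k → Fin 3) := fun p a ↦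
    if (a : ℕ) < p.2 then p.1.castSucc else 2
  refine le_of_eq_of_le ?_ (logHeight_comp_le sel _)
  congr 1
  funext ⟨s, i⟩
  have hval : ∀ a : Fin k, (![x, y, 1] : Fin 3 → K) (sel (s, i) a) =
      if (a : ℕ) < i then ![x, y] s else 1 := by
    intro a
    dsimp only [sel]
    split_ifs
    · fin_cases s <;> rfl
    · rfl
  simp only [Function.comp_apply, hval]
  rw [Finset.prod_ite, Finset.prod_const_one, mul_one, Finset.prod_const]
  congr 1
  rw [Fin.card_filter_val_lt]
  have := i.2
  omega

theorem logHeight_aeval_le {P Q R : ℤ[X]} {k : ℕ} {B : ℝ} (hB : 1 ≤ B)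
    (hPdeg : P.natDegree ≤ k) (hQdeg : Q.natDegree ≤ k) (hRdeg : R.natDegree ≤ k)
    (hP : ∀ i, |(P.coeff i : ℝ)| ≤ B) (hQ : ∀ i, |(Q.coeff i : ℝ)| ≤ B)
    (hR : ∀ i, |(R.coeff i : ℝ)| ≤ B) (x y : K) :
    logHeight ![aeval x P, aeval y Q, aeval x R] ≤
      totalWeight K * (Real.log (2 * (k + 1)) + Real.log B) + k * logHeight ![x, y, 1] := by
  let M : Fin 3 × (Fin 2 × Fin (k + 1)) → ℤ := fun p ↦
    ![![P.coeff p.2.2, 0], ![0, Q.coeff p.2.2], ![R.coeff p.2.2, 0]] p.1 p.2.1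
  have hM : logHeight (fun p ↦ (M p : K)) ≤ totalWeight K * Real.log B := by
    refine logHeight_intCast_le M hB fun ⟨j, s, i⟩ ↦ ?_
    fin_cases j <;> fin_cases s <;> simp [M, hP, hQ, hR] <;> linarith
  have h := logHeight_linearMap_apply_le (fun p ↦ (M p : K))
    (fun p : Fin 2 × Fin (k + 1) ↦ ![x, y] p.1 ^ (p.2 : ℕ))
  have heval (T : ℤ[X]) (hT : T.natDegree ≤ k) (t : K) :
      aeval t T = ∑ i : Fin (k + 1), (T.coeff i : K) * t ^ (i : ℕ) := by
    rw [aeval_eq_sum_range' (Nat.lt_succ_of_le hT), Finset.sum_range]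
    simp [zsmul_eq_mul]
  have hvec : (fun j ↦ ∑ p, (M (j, p) : K) * ![x, y] p.1 ^ (p.2 : ℕ)) =
      ![aeval x P, aeval y Q, aeval x R] := by
    funext j
    fin_cases j <;> simp [M, Fintype.sum_prod_type, heval, hPdeg, hQdeg, hRdeg]
  rw [hvec, Nat.card_prod, Nat.card_fin, Nat.card_fin] at h
  have h3 := logHeight_pow_pow_le x y k
  push_cast at h
  linarith

end Heights

section HeightInequality

open Height AdmissibleAbsValues

variable {K : Type*} [Field K]

/-- The vector of values at `x` and `1 - x` of the Padé approximants. -/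
noncomputable def padeVec (a n : ℕ) (x : K) : Fin 3 → K :=
  ![aeval x (padeOuter a n), aeval (1 - x) ((-1) ^ n * padeOuter a n), aeval x (-padeInner a n)]

theorem padeVec_orthogonal (a n : ℕ) (x : K) :
    padeVec a n x 0 * x ^ (a + n + 1) + padeVec a n x 1 * (1 - x) ^ (a + n + 1) +
      padeVec a n x 2 = 0 := by
  have h := congrArg (aeval x) (padeOuter_add_padeOuter_comp a n)
  simp only [map_add, map_mul, map_pow, map_neg, map_one, map_sub, aeval_X, aeval_comp] at h
  simp only [padeVec, map_mul, map_pow, map_neg, map_one, Matrix.cons_val_zero,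
    Matrix.cons_val_one, Matrix.cons_val]
  linear_combination h

theorem padeVec_minor_ne_zero [CharZero K] (l : ℕ) {x : K} (hx : x ≠ 0) :
    padeVec l (l + 1) x 1 * padeVec (l + 1) l x 2 -
      padeVec (l + 1) l x 1 * padeVec l (l + 1) x 2 ≠ 0 := by
  obtain ⟨c, hc, h⟩ := exists_pade_minor_eq l
  have h := congrArg (aeval x) h
  simp only [map_mul, map_pow, map_neg, map_one, map_sub, aeval_X, aeval_comp, aeval_C] at h
  simp only [padeVec, map_mul, map_pow, map_neg, map_one, Matrix.cons_val_zero,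
    Matrix.cons_val_one, Matrix.cons_val]
  have hc' : algebraMap ℤ K c * x ^ (2 * l + 2) ≠ 0 :=
    mul_ne_zero (by simpa using hc) (pow_ne_zero _ hx)
  intro h0
  apply hc'
  linear_combination -h - h0

variable [AdmissibleAbsValues K]

theorem logHeight_vec_neg_one_le (A B : K) :
    logHeight ![A, B, -1] ≤ logHeight₁ A + logHeight₁ B := by
  rw [← logHeight₁_neg A, ← logHeight₁_neg B, logHeight₁_eq_logHeight, logHeight₁_eq_logHeight,
    ← logHeight_fun_mul_eq (x := ![-A, 1]) (fun h ↦ one_ne_zero (congrFun h 1))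
    (y := ![-B, 1]) (fun h ↦ one_ne_zero (congrFun h 1)), ← logHeight_neg]
  refine le_of_eq_of_le ?_ (logHeight_comp_le ![(0, 1), (1, 0), (1, 1)]
    (fun a : Fin 2 × Fin 2 ↦ ![-A, 1] a.1 * ![-B, 1] a.2))
  congr 1
  funext j
  fin_cases j <;> simp

theorem logHeight_le_of_orthogonal {A B X Y : K} {w : Fin 3 → K} (hu : A * X + B * Y = 1)
    (hw : w 0 * X + w 1 * Y + w 2 = 0) (hne : A * w 1 - B * w 0 ≠ 0) :
    logHeight ![X, Y, 1] ≤
      totalWeight K * Real.log 9 + (logHeight₁ A + logHeight₁ B) + logHeight w := by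
  have hw0 : w ≠ 0 := by rintro rfl; simp at hne
  have hu0 : (![A, B, -1] : Fin 3 → K) ≠ 0 := fun h ↦ by simpa using congrFun h 2
  have hcross : crossProduct ![A, B, -1] w = (A * w 1 - B * w 0) • ![X, Y, 1] := by
    rw [cross_apply]
    have hw2 : w 2 = -(w 0 * X + w 1 * Y) := by linear_combination hw
    funext j
    fin_cases j <;> simp [hw2]
    · linear_combination (-w 1) * hu
    · linear_combination (w 0) * hu
  have h := logHeight_crossProduct_le hu0 hw0
  rw [hcross, logHeight_smul_eq_logHeight _ hne] at h
  linarith [logHeight_vec_neg_one_le A B]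

theorem logHeight_padeVec_le {a n k : ℕ} (ha : a ≤ k) (hn : n ≤ k) (hk : 1 ≤ k) (x : K) :
    logHeight (padeVec a n x) ≤ totalWeight K * (11 * k) + k * logHeight ![x, 1 - x, 1] := by
  have hle : (2 : ℝ) ^ (4 * a + 2 * n + 1) ≤ 2 ^ (7 * k) :=
    pow_le_pow_right₀ one_le_two (by omega)
  have hP (i : ℕ) : |((padeOuter a n).coeff i : ℝ)| ≤ 2 ^ (7 * k) := by
    refine le_trans ?_ hle
    exact_mod_cast abs_coeff_padeOuter_le a n i
  have hR (i : ℕ) : |((-padeInner a n).coeff i : ℝ)| ≤ 2 ^ (7 * k) := by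
    rw [coeff_neg, Int.cast_neg, abs_neg]
    refine le_trans ?_ hle
    exact_mod_cast abs_coeff_padeInner_le a n i
  have hPd := (natDegree_padeOuter_le a n).trans ha
  have hQ : ((-1) ^ n * padeOuter a n).natDegree ≤ k ∧
      ∀ i, |((((-1) ^ n * padeOuter a n).coeff i : ℤ) : ℝ)| ≤ 2 ^ (7 * k) := by
    rcases neg_one_pow_eq_or ℤ[X] n with h | h <;> rw [h]
    · rw [one_mul]
      exact ⟨hPd, hP⟩
    · rw [neg_one_mul, natDegree_neg]
      exact ⟨hPd, fun i ↦ by rw [coeff_neg, Int.cast_neg, abs_neg]; exact hP i⟩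
  refine (logHeight_aeval_le (one_le_pow₀ one_le_two) hPd hQ.1
    (by rw [natDegree_neg]; exact (natDegree_padeInner_le a n).trans hn) hP hQ.2 hR
    x (1 - x)).trans ?_
  gcongr
  have h2 : Real.log (2 * (k + 1)) ≤ 4 * k := by
    have := Real.log_le_sub_one_of_pos (x := 2 * ((k : ℝ) + 1)) (by positivity)
    have : (1 : ℝ) ≤ k := by exact_mod_cast hk
    linarith
  have h3 : Real.log ((2 : ℝ) ^ (7 * k)) ≤ 7 * k := by
    rw [Real.log_pow]
    push_cast
    have := Real.log_two_lt_d9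
    nlinarith [(Nat.cast_nonneg k : (0 : ℝ) ≤ k)]
  linarith

/-- The gap principle for the solutions `(x, 1 - x)` and `(z, 1 - z)` of the unit equation. -/
theorem exists_mul_logHeight₁_le (K : Type*) [Field K] [CharZero K] [AdmissibleAbsValues K] :
    ∃ C : ℝ, ∀ x z : K, x ≠ 0 → 1 - x ≠ 0 → ∀ k : ℕ, 1 ≤ k →
      k * logHeight₁ x ≤ logHeight₁ (z / x ^ (2 * k)) +
        logHeight₁ ((1 - z) / (1 - x) ^ (2 * k)) + C * k := by
  refine ⟨totalWeight K * (Real.log 9 + 11), fun x z hx hy k hk ↦ ?_⟩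
  obtain ⟨l, rfl⟩ : ∃ l, k = l + 1 := ⟨k - 1, by omega⟩
  set A := z / x ^ (2 * (l + 1)) with hA
  set B := (1 - z) / (1 - x) ^ (2 * (l + 1)) with hB
  have hu : A * x ^ (2 * (l + 1)) + B * (1 - x) ^ (2 * (l + 1)) = 1 := by
    rw [hA, hB, div_mul_cancel₀ _ (pow_ne_zero _ hx), div_mul_cancel₀ _ (pow_ne_zero _ hy)]
    ring
  have hw₁ := padeVec_orthogonal l (l + 1) x
  have hw₂ := padeVec_orthogonal (l + 1) l x
  rw [show l + (l + 1) + 1 = 2 * (l + 1) by ring] at hw₁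
  rw [show l + 1 + l + 1 = 2 * (l + 1) by ring] at hw₂
  have key (w : Fin 3 → K)
      (hw : w 0 * x ^ (2 * (l + 1)) + w 1 * (1 - x) ^ (2 * (l + 1)) + w 2 = 0)
      (hne : A * w 1 - B * w 0 ≠ 0)
      (hle : logHeight w ≤ totalWeight K * (11 * (l + 1 : ℕ)) +
        (l + 1 : ℕ) * logHeight ![x, 1 - x, 1]) :
      (l + 1 : ℕ) * logHeight₁ x ≤ logHeight₁ A + logHeight₁ B +
        totalWeight K * (Real.log 9 + 11) * (l + 1 : ℕ) := by
    have h := logHeight_le_of_orthogonal hu hw hne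
    have hpow : (![x ^ (2 * (l + 1)), (1 - x) ^ (2 * (l + 1)), 1] : Fin 3 → K) =
        ![x, 1 - x, 1] ^ (2 * (l + 1)) := by
      funext j
      fin_cases j <;> simp
    rw [hpow, logHeight_pow] at h
    have hx1 : logHeight₁ x ≤ logHeight ![x, 1 - x, 1] := by
      rw [logHeight₁_eq_logHeight]
      refine le_of_eq_of_le ?_ (logHeight_comp_le ![0, 2] ![x, 1 - x, 1])
      congr 1
      funext j
      fin_cases j <;> rfl
    have h9 : 0 ≤ Real.log 9 := Real.log_nonneg (by norm_num)
    have hl : (1 : ℝ) ≤ (l + 1 : ℕ) := by exact_mod_cast hk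
    have h1 : (totalWeight K : ℝ) * Real.log 9 ≤ totalWeight K * Real.log 9 * (l + 1 : ℕ) :=
      le_mul_of_one_le_right (by positivity) hl
    have h2 := mul_le_mul_of_nonneg_left hx1 (zero_le_one.trans hl)
    rw [Nat.cast_mul, Nat.cast_ofNat] at h
    linarith
  by_cases h₁ : A * padeVec l (l + 1) x 1 - B * padeVec l (l + 1) x 0 = 0
  · refine key _ hw₂ (fun h₂ ↦ padeVec_minor_ne_zero l hx ?_)
      (logHeight_padeVec_le le_rfl (Nat.le_succ l) hk x)
    have e₁ : padeVec l (l + 1) x 1 = -B * padeVec l (l + 1) x 2 := by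
      linear_combination -(padeVec l (l + 1) x 1) * hu + B * hw₁ + x ^ (2 * (l + 1)) * h₁
    have e₂ : padeVec (l + 1) l x 1 = -B * padeVec (l + 1) l x 2 := by
      linear_combination -(padeVec (l + 1) l x 1) * hu + B * hw₂ + x ^ (2 * (l + 1)) * h₂
    rw [e₁, e₂]
    ring
  · exact key _ hw₁ h₁ (logHeight_padeVec_le (Nat.le_succ l) le_rfl hk x)

end HeightInequality

end Pade

/-- A set whose points repel each other along every direction is bounded. -/
theorem isBounded_of_mul_norm_le {W : Type*} [NormedAddCommGroup W] [NormedSpace ℝ W]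
    [ProperSpace W] {T : Set W} {C : ℝ}
    (hT : ∀ p ∈ T, ∀ q ∈ T, ∀ k : ℕ, 1 ≤ k → k * ‖p‖ ≤ 2 * ‖q - (2 * k : ℝ) • p‖ + C * k) :
    Bornology.IsBounded T := by
  by_contra hub
  have hex (r : ℝ) : ∃ p ∈ T, r < ‖p‖ := by
    by_contra! h
    exact hub (isBounded_iff_forall_norm_le.2 ⟨r, h⟩)
  choose p hpT hp using fun n : ℕ ↦ hex (n + 1)
  have hpos (n : ℕ) : 0 < ‖p n‖ := lt_trans (by positivity) (hp n)
  have hsphere (n : ℕ) : ‖p n‖⁻¹ • p n ∈ Metric.sphere (0 : W) 1 := by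
    rw [mem_sphere_zero_iff_norm, norm_smul, norm_inv, norm_norm, inv_mul_cancel₀ (hpos n).ne']
  obtain ⟨d, -, g, hg, hlim⟩ := (isCompact_sphere (0 : W) 1).tendsto_subseq hsphere
  obtain ⟨N', hN'⟩ := Metric.cauchySeq_iff.1 hlim.cauchySeq (1 / 16) (by norm_num)
  obtain ⟨m₀, hm₀⟩ := exists_nat_ge (2 * C)
  set m := max N' m₀
  have hidn (n : ℕ) : (n : ℝ) < ‖p (g n)‖ := by
    have h1 := hp (g n)
    have h2 : (n : ℝ) ≤ g n := by exact_mod_cast hg.id_le n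
    linarith
  set P := p (g m)
  have hPC : 2 * C ≤ ‖P‖ := by
    have h1 := hidn m
    have h2 : (m₀ : ℝ) ≤ m := by exact_mod_cast le_max_right N' m₀
    linarith
  obtain ⟨j₀, hj₀⟩ := exists_nat_ge (40 * ‖P‖)
  set j := max N' j₀
  set Q := p (g j)
  have hQP : 40 * ‖P‖ ≤ ‖Q‖ := by
    have h1 := hidn j
    have h2 : (j₀ : ℝ) ≤ j := by exact_mod_cast le_max_right N' j₀
    linarith
  have hPpos : 0 < ‖P‖ := hpos _
  have hQpos : 0 < ‖Q‖ := hpos _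
  have hdir : ‖‖Q‖⁻¹ • Q - ‖P‖⁻¹ • P‖ < 1 / 16 := by
    rw [← dist_eq_norm]
    exact hN' j (le_max_left _ _) m (le_max_left _ _)
  set t := ‖Q‖ / (2 * ‖P‖) with ht
  have ht20 : 20 ≤ t := by
    rw [ht, le_div_iff₀ (by positivity)]
    linarith
  have hfl : (⌊t⌋₊ : ℝ) ≤ t := Nat.floor_le (by linarith)
  have hfu : t < ⌊t⌋₊ + 1 := Nat.lt_floor_add_one t
  set k := ⌊t⌋₊
  have hk1 : 1 ≤ k := by
    have : (0 : ℝ) < k := by linarith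
    exact_mod_cast this
  have hQt : ‖Q‖ = t * (2 * ‖P‖) := by rw [ht, div_mul_cancel₀ _ (by positivity)]
  have hdecomp : Q - (2 * k : ℝ) • P =
      ‖Q‖ • (‖Q‖⁻¹ • Q - ‖P‖⁻¹ • P) + (2 * (t - k)) • P := by
    rw [smul_sub, smul_smul, smul_smul, mul_inv_cancel₀ hQpos.ne', one_smul,
      show ‖Q‖ * ‖P‖⁻¹ = 2 * t by rw [hQt]; field_simp, mul_sub, sub_smul]
    abel
  have hnorm : ‖Q - (2 * k : ℝ) • P‖ ≤ ‖Q‖ * (1 / 16) + 2 * ‖P‖ := by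
    rw [hdecomp]
    refine (norm_add_le _ _).trans (add_le_add ?_ ?_)
    · rw [norm_smul, norm_norm]
      gcongr
    · rw [norm_smul, Real.norm_of_nonneg (by linarith)]
      gcongr
      linarith
  have h := hT P (hpT _) Q (hpT _) k hk1
  rw [hQt] at hnorm
  have hCk : C * k ≤ ‖P‖ / 2 * k := by gcongr; linarith
  have : (k : ℝ) * ‖P‖ ≤ (t / 4 + 4 + k / 2) * ‖P‖ := by linarith
  have := le_of_mul_le_mul_right this hPpos
  linarith

section UnitEquation

open Height IsDedekindDomain NumberField

variable {K : Type*} [Field K] [NumberField K]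

theorem finitePlace_mk_eq_one {v : HeightOneSpectrum (𝓞 K)} {x : K} (h : v.valuation K x = 1) :
    FinitePlace.mk v x = 1 := by
  rw [FinitePlace.mk_apply, FinitePlace.norm_embedding, NumberField.HeightOneSpectrum.adicAbv_def,
    h, map_one, NNReal.coe_one]

/-- The logarithmic embedding of `Kˣ` with respect to the archimedean places and the primes
in `T`. -/
noncomputable def placeLog (T : Finset (HeightOneSpectrum (𝓞 K))) (x : K) :
    InfinitePlace K ⊕ T → ℝ :=
  Sum.elim (fun v ↦ v.mult * Real.log (v x)) fun v ↦ Real.log (FinitePlace.mk v.1 x)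

theorem placeLog_div_pow (T : Finset (HeightOneSpectrum (𝓞 K))) {x y : K} (hx : x ≠ 0)
    (hy : y ≠ 0) (m : ℕ) : placeLog T (x / y ^ m) = placeLog T x - (m : ℝ) • placeLog T y := by
  funext i
  rcases i with v | v
  · simp only [placeLog, Sum.elim_inl, Pi.sub_apply, Pi.smul_apply, smul_eq_mul, map_div₀, map_pow]
    rw [Real.log_div (by simpa using hx) (pow_ne_zero _ (by simpa using hy)), Real.log_pow]
    ring
  · simp only [placeLog, Sum.elim_inr, Pi.sub_apply, Pi.smul_apply, smul_eq_mul, map_div₀, map_pow]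
    rw [Real.log_div (by simpa using hx) (pow_ne_zero _ (by simpa using hy)), Real.log_pow]

open Real in
theorem logHeight₁_eq_of_unit (T : Finset (HeightOneSpectrum (𝓞 K))) {x : K}
    (hT : ∀ v ∉ T, v.valuation K x = 1) :
    logHeight₁ x = (∑ v : InfinitePlace K, v.mult * log⁺ (v x)) +
      ∑ v : T, log⁺ (FinitePlace.mk v.1 x) := by
  rw [NumberField.logHeight₁_eq]
  congr 1
  rw [← finsum_comp_equiv FinitePlace.equivHeightOneSpectrum.symm,
    finsum_eq_sum_of_support_subset (s := T), ← Finset.sum_coe_sort]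
  · rfl
  · intro v hv
    by_contra hvT
    refine hv ?_
    change log⁺ (FinitePlace.mk v x) = 0
    rw [finitePlace_mk_eq_one (hT v hvT), posLog_one]

theorem sum_abs_placeLog (T : Finset (HeightOneSpectrum (𝓞 K))) {x : K}
    (hT : ∀ v ∉ T, v.valuation K x = 1) :
    ∑ i, |placeLog T x i| = 2 * logHeight₁ x := by
  have habs (r : ℝ) : |Real.log r| = Real.posLog r + Real.posLog r⁻¹ := by
    rw [Real.posLog_apply, Real.posLog_apply, Real.log_inv]
    rcases le_total 0 (Real.log r) with h | h
    · rw [abs_of_nonneg h, max_eq_right h, max_eq_left (by linarith), add_zero]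
    · rw [abs_of_nonpos h, max_eq_left h, max_eq_right (by linarith), zero_add]
  have hT' : ∀ v ∉ T, v.valuation K x⁻¹ = 1 := fun v hv ↦ by rw [map_inv₀, hT v hv, inv_one]
  rw [two_mul]
  nth_rewrite 2 [← logHeight₁_inv]
  rw [logHeight₁_eq_of_unit T hT, logHeight₁_eq_of_unit T hT', Fintype.sum_sum_type]
  simp only [placeLog, Sum.elim_inl, Sum.elim_inr, abs_mul, Nat.abs_cast, habs, map_inv₀, mul_add,
    Finset.sum_add_distrib]
  ring

/-- **Siegel's theorem on the unit equation**: a number field contains only finitely many `x` such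
that `x` and `1 - x` are both `T`-units. -/
theorem finite_setOf_unit_one_sub_unit (T : Finset (HeightOneSpectrum (𝓞 K))) :
    {x : K | (x ≠ 0 ∧ 1 - x ≠ 0) ∧
      ∀ v ∉ T, v.valuation K x = 1 ∧ v.valuation K (1 - x) = 1}.Finite := by
  set U := {x : K | (x ≠ 0 ∧ 1 - x ≠ 0) ∧
      ∀ v ∉ T, v.valuation K x = 1 ∧ v.valuation K (1 - x) = 1}
  obtain ⟨C, hC⟩ := exists_mul_logHeight₁_le K
  let Λ : K → PiLp 1 (fun _ : (InfinitePlace K ⊕ T) ⊕ (InfinitePlace K ⊕ T) ↦ ℝ) := fun x ↦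
    WithLp.toLp 1 (Sum.elim (placeLog T x) (placeLog T (1 - x)))
  have hnorm (x y : K) (m : ℝ) : ‖Λ y - m • Λ x‖ = ∑ i, |placeLog T y i - m * placeLog T x i| +
      ∑ i, |placeLog T (1 - y) i - m * placeLog T (1 - x) i| := by
    rw [PiLp.norm_eq_of_L1, Fintype.sum_sum_type]
    simp [Λ, Real.norm_eq_abs]
  have hΛ {x : K} (hx : x ∈ U) : ‖Λ x‖ = 2 * logHeight₁ x + 2 * logHeight₁ (1 - x) := by
    have := hnorm 0 x 0
    simp only [zero_smul, sub_zero, zero_mul] at this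
    rw [this, sum_abs_placeLog T fun v hv ↦ (hx.2 v hv).1,
      sum_abs_placeLog T fun v hv ↦ (hx.2 v hv).2]
  have hdiv {a b : K} (ha : a ≠ 0) (hb : b ≠ 0) (haT : ∀ v ∉ T, v.valuation K a = 1)
      (hbT : ∀ v ∉ T, v.valuation K b = 1) (m : ℕ) :
      ∑ i, |placeLog T a i - m * placeLog T b i| = 2 * logHeight₁ (a / b ^ m) := by
    rw [← sum_abs_placeLog T fun v hv ↦ by rw [map_div₀, map_pow, haT v hv, hbT v hv]; simp,
      placeLog_div_pow T ha hb]
    simp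
  have hbdd : Bornology.IsBounded (Λ '' U) := by
    refine isBounded_of_mul_norm_le (C := 4 * C + 2 * (totalWeight K * Real.log 2)) ?_
    rintro _ ⟨x, hx, rfl⟩ _ ⟨y, hy, rfl⟩ k hk
    have h1 := hnorm x y ((2 * k : ℕ) : ℝ)
    rw [hdiv hy.1.1 hx.1.1 (fun v hv ↦ (hy.2 v hv).1) (fun v hv ↦ (hx.2 v hv).1),
      hdiv hy.1.2 hx.1.2 (fun v hv ↦ (hy.2 v hv).2) (fun v hv ↦ (hx.2 v hv).2)] at h1
    have h2 := hC x y hx.1.1 hx.1.2 k hk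
    have h3 := logHeight₁_sub_le 1 x
    rw [logHeight₁_one, add_zero] at h3
    rw [hΛ hx]
    push_cast at h1
    rw [h1]
    have h4 := mul_le_mul_of_nonneg_left h3 (Nat.cast_nonneg (α := ℝ) k)
    linarith
  obtain ⟨B, hB⟩ := isBounded_iff_forall_norm_le.1 hbdd
  refine (NumberField.finite_setOfPred_logHeight₁_le K B).subset fun x hx ↦ ?_
  have h := hB _ (Set.mem_image_of_mem Λ hx)
  rw [hΛ hx] at h
  have h1 := zero_le_logHeight₁ x
  have h2 := zero_le_logHeight₁ (1 - x)
  change logHeight₁ x ≤ B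
  linarith

end UnitEquation

section UnitsModSquares

open IsDedekindDomain NumberField

theorem exists_finite_forall_eq_mul_sq (G : Type*) [CommGroup G] [Module.Finite ℤ (Additive G)] :
    ∃ R : Set G, R.Finite ∧ ∀ g : G, ∃ a ∈ R, ∃ s : G, g = a * s ^ 2 := by
  obtain ⟨n, s, hs⟩ := Module.Finite.exists_fin (R := ℤ) (M := Additive G)
  refine ⟨Set.range fun e : Fin n → Fin 2 ↦ (∑ i, ((e i : ℕ) : ℤ) • s i).toMul,
    Set.finite_range _, fun g ↦ ?_⟩
  have hg : Additive.ofMul g ∈ Submodule.span ℤ (Set.range s) := hs ▸ Submodule.mem_top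
  obtain ⟨c, hc⟩ := (Submodule.mem_span_range_iff_exists_fun ℤ).1 hg
  refine ⟨_, ⟨fun i ↦ ⟨(c i % 2).toNat, by omega⟩, rfl⟩, (∑ i, (c i / 2) • s i).toMul, ?_⟩
  apply Additive.ofMul.injective
  rw [ofMul_mul, ofMul_pow, ofMul_toMul, ofMul_toMul, ← hc, Finset.smul_sum,
    ← Finset.sum_add_distrib]
  refine Finset.sum_congr rfl fun i _ ↦ ?_
  rw [Int.toNat_of_nonneg (by omega), ← natCast_zsmul, smul_smul, ← add_smul]
  congr 1
  push_cast
  omega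

variable {K : Type*} [Field K] [NumberField K]

/-- The valuations of an `S`-unit at the primes of `S`. -/
noncomputable def unitValuations (S : Finset (HeightOneSpectrum (𝓞 K))) :
    Additive ((S : Set (HeightOneSpectrum (𝓞 K))).unit K) →+ (S → ℤ) where
  toFun u v := WithZero.log (v.1.valuation K (u.toMul : Kˣ))
  map_zero' := by
    funext v
    simp
  map_add' u w := by
    funext v
    simp [WithZero.log_mul]

theorem exists_units_of_unitValuations_eq_zero (S : Finset (HeightOneSpectrum (𝓞 K)))
    {u : Additive ((S : Set (HeightOneSpectrum (𝓞 K))).unit K)} (hu : unitValuations S u = 0) :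
    ∃ x : (𝓞 K)ˣ, Units.map (algebraMap (𝓞 K) K).toMonoidHom x = (u.toMul : Kˣ) := by
  have hone (v : HeightOneSpectrum (𝓞 K)) : v.valuation K ((u.toMul : Kˣ) : K) = 1 := by
    by_cases hv : v ∈ S
    · have h : WithZero.log (v.valuation K ((u.toMul : Kˣ) : K)) = 0 := congrFun hu ⟨v, hv⟩
      rw [← WithZero.exp_log (x := v.valuation K ((u.toMul : Kˣ) : K)) (by simp), h,
        WithZero.exp_zero]
    · exact u.toMul.2 v hv
  obtain ⟨a, ha⟩ := HeightOneSpectrum.mem_integers_of_valuation_le_one K ((u.toMul : Kˣ) : K)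
    fun v ↦ (hone v).le
  obtain ⟨b, hb⟩ := HeightOneSpectrum.mem_integers_of_valuation_le_one K ((u.toMul : Kˣ) : K)⁻¹
    fun v ↦ by rw [map_inv₀, hone v, inv_one]
  have hab : a * b = 1 := by
    apply FaithfulSMul.algebraMap_injective (𝓞 K) K
    rw [map_mul, ha, hb, map_one, mul_inv_cancel₀ (Units.ne_zero _)]
  exact ⟨⟨a, b, hab, by rw [mul_comm, hab]⟩, Units.ext ha⟩

/-- The group of `S`-units of a number field is finitely generated. -/
instance moduleFinite_additive_unit (S : Finset (HeightOneSpectrum (𝓞 K))) :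
    Module.Finite ℤ (Additive ((S : Set (HeightOneSpectrum (𝓞 K))).unit K)) := by
  let incl : (𝓞 K)ˣ →* (S : Set (HeightOneSpectrum (𝓞 K))).unit K :=
    (Units.map (algebraMap (𝓞 K) K).toMonoidHom).codRestrict _ fun x v _ ↦ by
      have h : v.valuation K ((x : 𝓞 K) : K) * v.valuation K (((x⁻¹ : (𝓞 K)ˣ) : 𝓞 K) : K) = 1 := by
        rw [← map_mul, ← map_mul, Units.mul_inv, map_one, map_one]
      exact le_antisymm (v.valuation_le_one _) (h ▸ mul_le_of_le_one_right' (v.valuation_le_one _))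
  refine ⟨Submodule.fg_of_fg_map_of_fg_inf_ker (unitValuations S).toIntLinearMap
    (IsNoetherian.noetherian _) ?_⟩
  rw [top_inf_eq]
  have hle : LinearMap.ker (unitValuations S).toIntLinearMap ≤
      LinearMap.range incl.toAdditive.toIntLinearMap := by
    intro u hu
    obtain ⟨x, hx⟩ := exists_units_of_unitValuations_eq_zero S (u := u) hu
    exact ⟨Additive.ofMul x, congrArg Additive.ofMul (Subtype.ext hx)⟩
  exact isNoetherian_submodule.1 inferInstance _ hle

end UnitsModSquares

section Descent

open IsDedekindDomain NumberField

variable {K : Type*} [Field K] [NumberField K]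

theorem finite_setOf_valuation_ne_one {x : K} (hx : x ≠ 0) :
    {v : HeightOneSpectrum (𝓞 K) | v.valuation K x ≠ 1}.Finite := by
  refine ((HeightOneSpectrum.Support.finite (R := 𝓞 K) x).union
    (HeightOneSpectrum.Support.finite (R := 𝓞 K) x⁻¹)).subset fun v hv ↦ ?_
  rcases lt_or_gt_of_ne hv with h | h
  · right
    change 1 < v.valuation K x⁻¹
    rw [map_inv₀]
    exact (one_lt_inv₀ (by simpa [zero_lt_iff] using hx)).2 h
  · exact Or.inl h

theorem finite_setOf_under_mem (L : Type*) [Field L] [NumberField L] [Algebra K L]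
    (S : Finset (HeightOneSpectrum (𝓞 K))) :
    {w : HeightOneSpectrum (𝓞 L) | w.under (𝓞 K) ∈ S}.Finite := by
  have h : {w : HeightOneSpectrum (𝓞 L) | w.under (𝓞 K) ∈ S} =
      ⋃ v ∈ S, {w : HeightOneSpectrum (𝓞 L) | w.under (𝓞 K) = v} := by
    ext w
    simp
  rw [h]
  refine S.finite_toSet.biUnion fun v _ ↦ ?_
  refine Set.Finite.of_finite_image (f := HeightOneSpectrum.asIdeal) ?_
    fun w₁ _ w₂ _ h ↦ HeightOneSpectrum.ext h
  refine (Algebra.QuasiFinite.finite_primesOver (S := 𝓞 L) v.asIdeal).subset ?_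
  rintro _ ⟨w, rfl, rfl⟩
  exact ⟨w.isPrime, ⟨rfl⟩⟩

theorem valuation_under_eq (L : Type*) [Field L] [NumberField L] [Algebra K L]
    (w : HeightOneSpectrum (𝓞 L)) : ∃ e : ℕ, ∀ x : K,
      w.valuation L (algebraMap K L x) = (w.under (𝓞 K)).valuation K x ^ e := by
  have : w.asIdeal.LiesOver (w.under (𝓞 K)).asIdeal := ⟨rfl⟩
  exact ⟨_, fun x ↦ ((w.under (𝓞 K)).valuation_liesOver L w x).symm⟩

theorem finite_setOf_sq_eq_sq_add_unit {L : Type*} [Field L] [NumberField L] [Algebra K L]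
    (S : Finset (HeightOneSpectrum (𝓞 K))) {A E : K} (hA : A ≠ 0) (hE : E ≠ 0) {c : L}
    (hc : c ^ 2 = algebraMap K L A) :
    {z : K | (∀ v ∉ S, v.valuation K z ≤ 1) ∧
      ∃ u ∈ (S : Set (HeightOneSpectrum (𝓞 K))).unit K, z ^ 2 = A + E * u}.Finite := by
  have hc0 : c ≠ 0 := by
    rintro rfl
    exact hA (by simpa using hc.symm)
  have h2c : 2 * c ≠ 0 := mul_ne_zero two_ne_zero hc0
  have hE' : algebraMap K L E ≠ 0 := by simpa using hE
  let T := (((finite_setOf_under_mem L S).union (finite_setOf_valuation_ne_one hc0)).union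
    ((finite_setOf_valuation_ne_one hE').union (finite_setOf_valuation_ne_one h2c))).toFinset
  refine Set.Finite.of_finite_image (f := fun z : K ↦ (algebraMap K L z + c) / (2 * c))
    ((finite_setOf_unit_one_sub_unit T).subset ?_) ?_
  · rintro _ ⟨z, ⟨hz, u, hu, hzu⟩, rfl⟩
    have hprod : (algebraMap K L z + c) * (c - algebraMap K L z) =
        -(algebraMap K L E * algebraMap K L u) := by
      have h := congrArg (algebraMap K L) hzu
      rw [map_pow, map_add, map_mul, ← hc] at h
      linear_combination -h
    have hsub : 1 - (algebraMap K L z + c) / (2 * c) = (c - algebraMap K L z) / (2 * c) := by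
      field_simp
      ring
    have hprod0 : (algebraMap K L z + c) * (c - algebraMap K L z) ≠ 0 := by
      rw [hprod]
      simp [hE]
    refine ⟨?_, fun w hw ↦ ?_⟩
    · rw [hsub]
      exact ⟨div_ne_zero (left_ne_zero_of_mul hprod0) h2c,
        div_ne_zero (right_ne_zero_of_mul hprod0) h2c⟩
    · simp only [T, Set.Finite.mem_toFinset, Set.mem_union, Set.mem_ofPred_eq, not_or, not_not] at hw
      obtain ⟨⟨hwS, hwc⟩, hwE, hw2c⟩ := hw
      obtain ⟨e, he⟩ := valuation_under_eq (K := K) L w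
      have hwz : w.valuation L (algebraMap K L z) ≤ 1 := by
        rw [he]
        exact pow_le_one' (hz _ hwS) e
      have hwu : w.valuation L (algebraMap K L u) = 1 := by
        rw [he, hu _ hwS, one_pow]
      have hmul := congrArg (w.valuation L) hprod
      rw [Valuation.map_neg, map_mul, map_mul, hwE, hwu, one_mul] at hmul
      have h1 : w.valuation L (algebraMap K L z + c) ≤ 1 :=
        (Valuation.map_add _ _ _).trans (max_le hwz hwc.le)
      have h2 : w.valuation L (c - algebraMap K L z) ≤ 1 :=
        (Valuation.map_sub _ _ _).trans (max_le hwc.le hwz)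
      rw [hsub, map_div₀, map_div₀, hw2c, div_one, div_one]
      exact ⟨le_antisymm h1 (hmul ▸ mul_le_of_le_one_right' h2),
        le_antisymm h2 (hmul ▸ mul_le_of_le_one_left' h1)⟩
  · intro z₁ _ z₂ _ h
    have h' := (div_left_inj' h2c).1 h
    exact (algebraMap K L).injective (add_right_cancel h')

theorem finite_setOf_sq_eq_add_unit (S : Finset (HeightOneSpectrum (𝓞 K))) {A E : K}
    (hA : A ≠ 0) (hE : E ≠ 0) :
    {z : K | (∀ v ∉ S, v.valuation K z ≤ 1) ∧
      ∃ u ∈ (S : Set (HeightOneSpectrum (𝓞 K))).unit K, z ^ 2 = A + E * u}.Finite := by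
  obtain ⟨c, hc⟩ := IsAlgClosed.exists_pow_nat_eq (algebraMap K (AlgebraicClosure K) A) two_pos
  let L := IntermediateField.adjoin K {c}
  have : FiniteDimensional K L :=
    IntermediateField.adjoin.finiteDimensional (Algebra.IsIntegral.isIntegral c)
  have : NumberField L := NumberField.of_module_finite K L
  exact finite_setOf_sq_eq_sq_add_unit (L := L) S hA hE
    (c := ⟨c, IntermediateField.mem_adjoin_simple_self K c⟩) (Subtype.ext hc)

end Descent

/-- for fixed `D, E ∈ K^*`, the set of principal ideals `y·R_S` with `y` an
`S`-integer such that `y² = D·u + E·v` for some `S`-units `u, v` is finite. -/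
theorem finite_principal_ideals_of_unit_eq {K : Type*} [Field K] [NumberField K]
    (S : Finset (HeightOneSpectrum (NumberField.RingOfIntegers K)))
    (D E : K) (hD : D ≠ 0) (hE : E ≠ 0) :
    {I : Ideal (sIntegers K S) | ∃ y : sIntegers K S, I = Ideal.span {y} ∧
        ∃ u v : Kˣ,
          u ∈ (S : Set (HeightOneSpectrum (NumberField.RingOfIntegers K))).unit K ∧
          v ∈ (S : Set (HeightOneSpectrum (NumberField.RingOfIntegers K))).unit K ∧
          (y : K) ^ 2 = D * u + E * v}.Finite := by
  obtain ⟨R, hR, hrep⟩ := exists_finite_forall_eq_mul_sq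
    ((S : Set (HeightOneSpectrum (NumberField.RingOfIntegers K))).unit K)
  have hfin : (⋃ a ∈ R, (fun z : sIntegers K S ↦ Ideal.span {z}) '' Set.preimage Subtype.val
      {z : K | (∀ v ∉ S, v.valuation K z ≤ 1) ∧
        ∃ u ∈ (S : Set (HeightOneSpectrum (NumberField.RingOfIntegers K))).unit K,
          z ^ 2 = D * ((a : Kˣ) : K) + E * u}).Finite :=
    hR.biUnion fun a _ ↦ ((finite_setOf_sq_eq_add_unit S
      (mul_ne_zero hD (Units.ne_zero (a : Kˣ))) hE).preimage
        Subtype.val_injective.injOn).image _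
  refine hfin.subset ?_
  rintro _ ⟨y, rfl, u, v, hu, hv, hy⟩
  obtain ⟨a, ha, s, hs⟩ := hrep ⟨u, hu⟩
  have hua : u = (a : Kˣ) * (s : Kˣ) ^ 2 := congrArg Subtype.val hs
  have hmem (t : (S : Set (HeightOneSpectrum (NumberField.RingOfIntegers K))).unit K) :
      ((t : Kˣ) : K) ∈ sIntegers K S := fun w hw ↦ (t.2 w hw).le
  let sInv : sIntegers K S := ⟨((s⁻¹ : _) : Kˣ), hmem s⁻¹⟩
  have hunit : IsUnit sInv := by
    refine IsUnit.of_mul_eq_one ⟨((s : Kˣ) : K), hmem s⟩ (Subtype.ext ?_)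
    simp [sInv]
  refine Set.mem_biUnion ha ⟨y * sInv, ⟨(y * sInv).2, v * ((s⁻¹ : _) : Kˣ) ^ 2, ?_, ?_⟩, ?_⟩
  · exact mul_mem hv (pow_mem s⁻¹.2 2)
  · have hs0 : ((s : Kˣ) : K) ≠ 0 := Units.ne_zero _
    have : ((y * sInv : sIntegers K S) : K) = y * ((s : Kˣ) : K)⁻¹ := by simp [sInv]
    rw [this, mul_pow, hy, hua]
    push_cast
    field_simp
  · exact Ideal.span_singleton_mul_right_unit hunit y
end

section
/- Fix D, E ∈ K. The set of principal ideals { y·R_S : (u,v,y) ∈ R_S^* × R_S^* × R_S with y² = D²u² + D u E v + E²v² } is finite. -/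
open IsDedekindDomain

set_option synthInstance.maxHeartbeats 400000

namespace UnitEquation

section Pade

open Polynomial Finset

variable {K : Type*} [Field K]

/-- The antiderivative without constant term of a polynomial. -/
noncomputable def antiderivative : K[X] →ₗ[K] K[X] :=
  Polynomial.lsum fun n => ((n : K) + 1)⁻¹ • Polynomial.monomial (n + 1)

/-- The integral of a polynomial between two elements of the field. -/
noncomputable def integral (u v : K) : K[X] →ₗ[K] K :=
  (Polynomial.leval v - Polynomial.leval u) ∘ₗ antiderivative

lemma integral_apply (u v : K) (f : K[X]) :
    integral u v f = (antiderivative f).eval v - (antiderivative f).eval u := rfl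

lemma integral_add_integral (u v w : K) (f : K[X]) :
    integral u v f + integral v w f = integral u w f := by
  simp only [integral_apply]
  ring

variable [CharZero K]

lemma derivative_antiderivative (f : K[X]) : derivative (antiderivative f) = f := by
  induction f using Polynomial.induction_on' with
  | add p q hp hq => simp [hp, hq]
  | monomial n a =>
    have : (n : K) + 1 ≠ 0 := Nat.cast_add_one_ne_zero n
    simp only [antiderivative, lsum_apply, LinearMap.smul_apply, Polynomial.smul_monomial,
      smul_eq_mul]
    rw [sum_monomial_index _ _ (by simp), derivative_monomial]
    push_cast
    rw [mul_right_comm, inv_mul_cancel₀ this, one_mul]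

lemma integral_derivative (u v : K) (G : K[X]) :
    integral u v (derivative G) = G.eval v - G.eval u := by
  have h : derivative (antiderivative (derivative G) - G) = 0 := by
    simp [derivative_antiderivative]
  have h2 := eq_C_of_derivative_eq_zero h
  have hu := congrArg (eval u) h2
  have hv := congrArg (eval v) h2
  simp only [eval_sub, eval_C] at hu hv
  rw [integral_apply]
  linear_combination hv - hu

lemma integral_comp (u v : K) (f l : K[X]) :
    integral u v (derivative l * f.comp l) = integral (l.eval u) (l.eval v) f := by
  have h := integral_derivative u v ((antiderivative f).comp l)
  rw [derivative_comp, derivative_antiderivative] at h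
  rw [h, integral_apply, eval_comp, eval_comp]

lemma integral_beta (m n : ℕ) :
    ((m + n + 1).factorial : K) * integral 0 1 (X ^ m * (1 - X) ^ n) =
      m.factorial * n.factorial := by
  induction n generalizing m with
  | zero =>
    have h := integral_derivative (0 : K) 1 (X ^ (m + 1))
    have e : derivative (X ^ (m + 1) : K[X]) = ((m : K) + 1) • X ^ m := by
      simp [Polynomial.smul_eq_C_mul]
    rw [e, map_smul] at h
    simp at h
    simp [Nat.factorial_succ]
    linear_combination (m.factorial : K) * h
  | succ n ih =>
    have hm : (m : K) + 1 ≠ 0 := Nat.cast_add_one_ne_zero m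
    have h := integral_derivative (0 : K) 1 (X ^ (m + 1) * (1 - X) ^ (n + 1))
    have e : derivative (X ^ (m + 1) * (1 - X) ^ (n + 1) : K[X]) =
        ((m : K) + 1) • (X ^ m * (1 - X) ^ (n + 1)) -
          ((n : K) + 1) • (X ^ (m + 1) * (1 - X) ^ n) := by
      simp [Polynomial.smul_eq_C_mul, derivative_pow]
      ring
    rw [e, map_sub, map_smul, map_smul] at h
    simp at h
    have h2 := ih (m + 1)
    rw [show m + 1 + n + 1 = m + (n + 1) + 1 by ring] at h2
    apply mul_left_cancel₀ hm
    rw [Nat.factorial_succ m] at h2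
    rw [Nat.factorial_succ n]
    push_cast at h2 ⊢
    linear_combination ((m + (n + 1) + 1).factorial : K) * h + ((n : K) + 1) * h2

/-- The polynomial, with integer coefficients, proportional to
`∫₀¹ s ^ a * (1 - s) ^ c * (1 - x * s) ^ b ds`. -/
def padeSum {A : Type*} [CommRing A] (a b c : ℕ) (x : A) : A :=
  ∑ k ∈ range (b + 1), (((a + b + c + 1).choose (b - k) * (a + k).choose k : ℕ) : A) * (-x) ^ k

lemma integral_eq_padeSum (a b c : ℕ) (x : K) :
    ((a + b + c + 1).factorial : K) *
        integral 0 1 (X ^ a * (1 - X) ^ c * (1 - C x * X) ^ b) =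
      (a.factorial * b.factorial * c.factorial : ℕ) * padeSum a b c x := by
  have e : (X ^ a * (1 - X) ^ c * (1 - C x * X) ^ b : K[X]) =
      ∑ k ∈ range (b + 1), ((b.choose k : K) * (-x) ^ k) • (X ^ (a + k) * (1 - X) ^ c) := by
    rw [show (1 - C x * X : K[X]) = C (-x) * X + 1 by simp; ring, add_pow, mul_sum]
    refine sum_congr rfl fun k _ => ?_
    simp [Polynomial.smul_eq_C_mul]
    ring
  rw [e, map_sum, padeSum, mul_sum, mul_sum]
  refine sum_congr rfl fun k hk => ?_
  have hk' : k ≤ b := by simpa [Nat.lt_succ_iff] using hk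
  rw [map_smul]
  have h1 := integral_beta (K := K) (a + k) c
  have h2 : ((b.choose k * k.factorial * (b - k).factorial : ℕ) : K) = b.factorial :=
    congrArg _ (Nat.choose_mul_factorial_mul_factorial hk')
  have h3 : (((a + b + c + 1).choose (b - k) * (b - k).factorial * (a + k + c + 1).factorial : ℕ)
      : K) = (a + b + c + 1).factorial := by
    have := Nat.choose_mul_factorial_mul_factorial (n := a + b + c + 1) (k := b - k) (by lia)
    rw [show a + b + c + 1 - (b - k) = a + k + c + 1 by lia] at this
    exact congrArg _ this
  have h4 : (((a + k).choose k * k.factorial * a.factorial : ℕ) : K) = (a + k).factorial := by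
    have := Nat.choose_mul_factorial_mul_factorial (n := a + k) (k := k) (by lia)
    rw [show a + k - k = a by lia] at this
    exact congrArg _ this
  push_cast at h2 h3 h4 ⊢
  rw [← h4] at h1
  rw [← h3, ← h2, smul_eq_mul]
  linear_combination ((a + b + c + 1).choose (b - k) : K) * (b - k).factorial * b.choose k *
    (-x) ^ k * h1

/-- The integrand whose periods between `0`, `1` and `x` are the Padé forms. -/
noncomputable def integrand (a b c : ℕ) (x : K) : K[X] :=
  X ^ a * (1 - X) ^ b * (C x - X) ^ c

lemma integral_integrand_zero_x (a b c : ℕ) (x : K) :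
    ((a + b + c + 1).factorial : K) * integral 0 x (integrand a b c x) =
      (a.factorial * b.factorial * c.factorial : ℕ) *
        (x ^ (a + c + 1) * padeSum a b c x) := by
  have h := integral_comp 0 1 (integrand a b c x) (C x * X)
  have e : derivative (C x * X) * (integrand a b c x).comp (C x * X) =
      x ^ (a + c + 1) • (X ^ a * (1 - X) ^ c * (1 - C x * X) ^ b) := by
    simp only [integrand, derivative_C_mul, derivative_X, mul_comp, pow_comp, sub_comp, X_comp,
      one_comp, C_comp, Polynomial.smul_eq_C_mul, map_pow]
    rw [show (C x - C x * X : K[X]) = C x * (1 - X) by ring, mul_pow, mul_pow]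
    ring
  rw [e, map_smul, smul_eq_mul] at h
  simp only [eval_mul, eval_C, eval_X, mul_zero, mul_one] at h
  rw [← h]
  linear_combination x ^ (a + c + 1) * integral_eq_padeSum a b c x

lemma integral_integrand_x_one (a b c : ℕ) (x : K) :
    ((a + b + c + 1).factorial : K) * integral x 1 (integrand a b c x) =
      (a.factorial * b.factorial * c.factorial : ℕ) *
        ((-1) ^ c * (1 - x) ^ (b + c + 1) * padeSum b a c (1 - x)) := by
  have h := integral_comp 0 1 (integrand a b c x) (1 - C (1 - x) * X)
  have e : derivative (1 - C (1 - x) * X) * (integrand a b c x).comp (1 - C (1 - x) * X) =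
      (-((-1) ^ c * (1 - x) ^ (b + c + 1))) •
        (X ^ b * (1 - X) ^ c * (1 - C (1 - x) * X) ^ a) := by
    simp only [integrand, derivative_sub, derivative_one, derivative_C_mul, derivative_X, mul_comp,
      pow_comp, sub_comp, X_comp, one_comp, C_comp, Polynomial.smul_eq_C_mul, map_pow, map_neg,
      map_mul, map_one]
    rw [show (C x - (1 - C (1 - x) * X) : K[X]) = -1 * (C (1 - x) * (1 - X)) by
      simp only [map_sub, map_one]; ring,
      show (1 - (1 - C (1 - x) * X) : K[X]) = C (1 - x) * X by ring, mul_pow, mul_pow, mul_pow]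
    ring
  rw [e, map_smul, smul_eq_mul] at h
  simp only [eval_mul, eval_C, eval_X, mul_zero, mul_one, eval_sub, eval_one, sub_zero,
    sub_sub_cancel] at h
  have h2 := integral_eq_padeSum b a c (1 - x)
  rw [show b + a + c + 1 = a + b + c + 1 by ring] at h2
  have h3 : integral x 1 (integrand a b c x) = - integral 1 x (integrand a b c x) := by
    simp only [integral_apply]; ring
  rw [h3, ← h]
  push_cast at h2 ⊢
  linear_combination (-1) ^ c * (1 - x) ^ (b + c + 1) * h2

lemma integral_integrand_zero_one (a b c : ℕ) {x : K} (hx : x ≠ 0) :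
    ((a + b + c + 1).factorial : K) * integral 0 1 (integrand a b c x) =
      (a.factorial * b.factorial * c.factorial : ℕ) * (x ^ c * padeSum a c b x⁻¹) := by
  have e : integrand a b c x = x ^ c • (X ^ a * (1 - X) ^ b * (1 - C x⁻¹ * X) ^ c) := by
    rw [integrand, Polynomial.smul_eq_C_mul, map_pow]
    have h1 : (C x * C x⁻¹ : K[X]) = 1 := by rw [← C_mul, mul_inv_cancel₀ hx, C_1]
    rw [show (C x - X : K[X]) = C x * (1 - C x⁻¹ * X) by linear_combination X * h1, mul_pow]
    ring
  rw [e, map_smul, smul_eq_mul]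
  have h2 := integral_eq_padeSum a c b x⁻¹
  rw [show a + c + b + 1 = a + b + c + 1 by ring] at h2
  push_cast at h2 ⊢
  linear_combination x ^ c * h2

lemma padeSum_identity (a b c : ℕ) {x : K} (hx : x ≠ 0) :
    x ^ (a + c + 1) * padeSum a b c x + (1 - x) ^ (b + c + 1) * ((-1) ^ c * padeSum b a c (1 - x)) =
      x ^ c * padeSum a c b x⁻¹ := by
  have hd : ((a.factorial * b.factorial * c.factorial : ℕ) : K) ≠ 0 := by
    exact_mod_cast by positivity
  apply mul_left_cancel₀ hd
  rw [← integral_integrand_zero_one a b c hx, ← integral_add_integral 0 x 1]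
  linear_combination -integral_integrand_zero_x a b c x - integral_integrand_x_one a b c x

/-- The periods of `integrand N N N x` and `integrand (N + 1) N N x` are not both proportional to
a given vector. -/
lemma integral_integrand_ne (N : ℕ) {x y : K} (hx1 : x ≠ 1) (hy : y ≠ 0)
    (h0 : integral 0 x (integrand N N N x) = y * integral 0 1 (integrand N N N x)) :
    integral 0 x (integrand (N + 1) N N x) ≠ y * integral 0 1 (integrand (N + 1) N N x) := by
  intro h1
  set L : K[X] →ₗ[K] K := integral 0 x - y • integral 0 1 with hL
  have hLd (G : K[X]) : L (derivative G) = G.eval x - G.eval 0 - y * (G.eval 1 - G.eval 0) := by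
    simp [hL, integral_derivative]
  have hX (j : ℕ) : L (integrand N N N x * X ^ j) = 0 := by
    induction j using Nat.twoStepInduction with
    | zero => simp [hL, h0]
    | one =>
      have : integrand N N N x * X ^ 1 = integrand (N + 1) N N x := by simp [integrand]; ring
      rw [this]
      simp [hL, h1]
    | more k ih0 ih1 =>
      have hk : (3 * (N + 1) + k : K) ≠ 0 := by
        exact_mod_cast (by positivity : 3 * (N + 1) + k ≠ 0)
      have h := hLd ((X * (1 - X) * (C x - X)) ^ (N + 1) * X ^ k)
      have e : derivative ((X * (1 - X) * (C x - X)) ^ (N + 1) * X ^ k) =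
          (3 * (N + 1) + k : K) • (integrand N N N x * X ^ (k + 2)) -
          ((1 + x) * (2 * (N + 1) + k)) • (integrand N N N x * X ^ (k + 1)) +
          (x * ((N + 1) + k)) • (integrand N N N x * X ^ k) := by
        rw [derivative_mul, derivative_pow, derivative_X_pow]
        simp only [derivative_mul, derivative_sub, derivative_X, derivative_one, derivative_C,
          integrand, Polynomial.smul_eq_C_mul, map_mul, map_add, map_natCast, map_ofNat, map_one,
          Nat.add_sub_cancel, mul_pow]
        rcases k with _ | k
        · simp; ring
        · simp; ring
      rw [e, map_add, map_sub, map_smul, map_smul, map_smul, ih0, ih1] at h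
      simpa [hk] using h
  have hg (g : K[X]) : L (integrand N N N x * g) = 0 := by
    induction g using Polynomial.induction_on' with
    | add p q hp hq => rw [mul_add, map_add, hp, hq, add_zero]
    | monomial n a =>
      rw [← C_mul_X_pow_eq_monomial, mul_left_comm, ← Polynomial.smul_eq_C_mul, map_smul, hX,
        smul_zero]
  have c1 : IsCoprime (X : K[X]) (1 - X) := ⟨1, 1, by ring⟩
  have c2 : IsCoprime (C x - X : K[X]) (1 - X) := by
    refine ⟨C (x - 1)⁻¹, -C (x - 1)⁻¹, ?_⟩
    have : (C (x - 1)⁻¹ * (C x - 1) : K[X]) = 1 := by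
      rw [← C_1, ← C_sub, ← C_mul, inv_mul_cancel₀ (sub_ne_zero.2 hx1)]
    linear_combination this
  have c12 := c1.mul_left c2
  obtain ⟨p, q, hpq⟩ := c12.pow (m := N + 1) (n := N + 1)
  set G := p * (X * (C x - X)) ^ (N + 1) with hG
  have d1 : (X * (C x - X)) ^ N ∣ derivative G := by
    refine ⟨derivative p * (X * (C x - X)) + p * ((N : K[X]) + 1) * derivative (X * (C x - X)), ?_⟩
    rw [hG, derivative_mul, derivative_pow]
    simp
    ring
  have d2 : (1 - X) ^ N ∣ derivative G := by
    have : G = 1 - q * (1 - X) ^ (N + 1) := by linear_combination hpq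
    refine ⟨-(derivative q * (1 - X) - q * ((N : K[X]) + 1)), ?_⟩
    rw [this, derivative_sub, derivative_mul, derivative_pow]
    simp
    ring
  obtain ⟨g, hg'⟩ := c12.pow (m := N) (n := N) |>.mul_dvd d1 d2
  have e : derivative G = integrand N N N x * g := by
    rw [hg', integrand, mul_pow]
    ring
  have h := hLd G
  rw [e, hg] at h
  have hG1 : G.eval 1 = 1 := by
    have := congrArg (eval 1) hpq
    simpa [hG] using this
  rw [hG1] at h
  simp [hG] at h
  exact hy h

end Pade

/-- A set on which a vector-valued map has finite sublevel sets is finite if no two of its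
values with nearly the same direction have comparable large norms. -/
lemma finite_of_gap {α E : Type*} [NormedAddCommGroup E] [NormedSpace ℝ E] [ProperSpace E]
    (A : Set α) (φ : α → E) (m : ℝ) (hm : 0 ≤ m)
    (hfin : ∀ B : ℝ, {x ∈ A | ‖φ x‖ ≤ B}.Finite)
    (hgap : ∀ x ∈ A, ∀ y ∈ A, ∀ N : ℕ, 1 ≤ N →
      N * ‖φ x‖ ≤ m * (14 * N + ‖φ y - (2 * N + 1 : ℝ) • φ x‖ + ‖φ x‖)) :
    A.Finite := by
  by_contra hA
  have hex (B : ℝ) : ∃ x ∈ A, B < ‖φ x‖ := by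
    by_contra! h
    exact hA ((hfin B).subset fun x hx => ⟨hx, h x hx⟩)
  choose s hsA hs using fun n : ℕ => hex n
  set d : ℕ → E := fun n => ‖φ (s n)‖⁻¹ • φ (s n) with hd
  have hdmem (n : ℕ) : d n ∈ Metric.closedBall (0 : E) 1 := by
    rw [mem_closedBall_zero_iff, hd]
    simp only [norm_smul, norm_inv, norm_norm]
    exact inv_mul_le_one
  obtain ⟨e, -, σ, hσ, hlim⟩ := (isCompact_closedBall (0 : E) 1).tendsto_subseq hdmem
  set δ : ℝ := 1 / (8 * (m + 1)) with hδ
  have hδ0 : 0 < δ := by positivity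
  have hmδ : m * δ ≤ 1 / 8 := by
    rw [hδ, mul_one_div, div_le_div_iff₀ (by positivity) (by norm_num)]
    linarith
  obtain ⟨n₀, hn₀⟩ := Metric.tendsto_atTop.1 hlim (δ / 2) (by positivity)
  have hbig (B : ℝ) : ∃ n ≥ n₀, B < ‖φ (s (σ n))‖ := by
    obtain ⟨k, hk⟩ := exists_nat_gt B
    refine ⟨max n₀ k, le_max_left _ _, hk.trans ((Nat.cast_le.2 ?_).trans_lt (hs _))⟩
    exact (le_max_right _ _).trans (hσ.id_le _)
  obtain ⟨i, hi, hxi⟩ := hbig (56 * m + 1)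
  obtain ⟨j, hj, hyj⟩ := hbig ((12 * m + 5) * ‖φ (s (σ i))‖)
  have hdist : ‖d (σ j) - d (σ i)‖ ≤ δ := by
    rw [← dist_eq_norm]
    have h1 := hn₀ i hi
    have h2 := hn₀ j hj
    have h3 := dist_triangle_right (d (σ j)) (d (σ i)) e
    simp only [Function.comp_apply] at h1 h2
    linarith
  have hg := hgap _ (hsA (σ i)) _ (hsA (σ j))
  simp only [hd] at hdist
  set x := φ (s (σ i))
  set y := φ (s (σ j))
  have hx0 : 0 < ‖x‖ := by linarith
  have hy0 : 0 < ‖y‖ := lt_of_le_of_lt (by positivity) hyj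
  set ρ := ‖y‖ / ‖x‖ with hρ
  have hρy : ‖y‖ = ρ * ‖x‖ := by rw [hρ]; field_simp
  have hρbig : 12 * m + 5 < ρ := by rwa [hρ, lt_div_iff₀ hx0]
  set N := ⌊(ρ - 1) / 2⌋₊ with hN
  have hN1 : (N : ℝ) ≤ (ρ - 1) / 2 := Nat.floor_le (by linarith)
  have hN2 : (ρ - 1) / 2 < N + 1 := Nat.lt_floor_add_one _
  have hNm : 6 * m + 1 < N := by linarith
  have hN0 : 1 ≤ N := by
    have : (1 : ℝ) < N := by linarith
    exact_mod_cast this.le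
  specialize hg N hN0
  have hdecomp : y - (2 * N + 1 : ℝ) • x =
      ‖y‖ • (‖y‖⁻¹ • y - ‖x‖⁻¹ • x) + (ρ - (2 * N + 1)) • x := by
    rw [smul_sub, smul_smul, smul_smul, mul_inv_cancel₀ hy0.ne', one_smul, sub_smul, hρ,
      div_eq_mul_inv]
    abel
  have hnorm : ‖y - (2 * N + 1 : ℝ) • x‖ ≤ (2 * N + 3) * ‖x‖ * δ + 2 * ‖x‖ := by
    rw [hdecomp]
    refine (norm_add_le _ _).trans (add_le_add ?_ ?_)
    · rw [norm_smul, norm_norm]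
      refine mul_le_mul ?_ hdist (norm_nonneg _) (by positivity)
      rw [hρy]
      exact mul_le_mul_of_nonneg_right (by linarith) hx0.le
    · rw [norm_smul, Real.norm_eq_abs, abs_of_nonneg (by linarith)]
      exact mul_le_mul_of_nonneg_right (by linarith) hx0.le
  have h1 : m * ‖y - (2 * N + 1 : ℝ) • x‖ ≤ (2 * N + 3) * ‖x‖ * (1 / 8) + 2 * m * ‖x‖ := by
    refine (mul_le_mul_of_nonneg_left hnorm hm).trans ?_
    have := mul_le_mul_of_nonneg_left hmδ (by positivity : 0 ≤ (2 * N + 3 : ℝ) * ‖x‖)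
    linarith
  have h2 : m * (14 * N) ≤ N * ‖x‖ / 4 := by
    have := mul_le_mul_of_nonneg_left hxi.le (Nat.cast_nonneg (α := ℝ) N)
    have : (0 : ℝ) ≤ N := by positivity
    nlinarith
  have h3 := mul_lt_mul_of_pos_right hNm hx0
  nlinarith

section GapPrinciple

open Finset

variable {K : Type*} [Field K]

lemma padeSum_mem (R : Subring K) (a b c : ℕ) {x : K} (hx : x ∈ R) : padeSum a b c x ∈ R :=
  sum_mem fun _ _ => mul_mem (natCast_mem R _) (pow_mem (neg_mem hx) _)

lemma abv_padeSum_le (v : AbsoluteValue K ℝ) (a b c : ℕ) (x : K) :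
    v (padeSum a b c x) ≤ 2 ^ (3 * (a + b + c) + 1) * max 1 (v x) ^ b := by
  have hterm : ∀ k ∈ range (b + 1),
      v ((((a + b + c + 1).choose (b - k) * (a + k).choose k : ℕ) : K) * (-x) ^ k) ≤
        2 ^ (a + b + c + 1) * 2 ^ (a + b) * max 1 (v x) ^ b := by
    intro k hk
    have hk' : k ≤ b := by simpa [Nat.lt_succ_iff] using hk
    rw [map_mul, map_pow, v.map_neg]
    refine mul_le_mul ((v.apply_nat_le_self _).trans ?_) ?_ (by positivity) (by positivity)
    · have h1 := Nat.choose_le_two_pow (a + b + c + 1) (b - k)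
      have h2 := (Nat.choose_le_two_pow (a + k) k).trans
        (Nat.pow_le_pow_right two_pos (by lia : a + k ≤ a + b))
      exact_mod_cast Nat.mul_le_mul h1 h2
    · exact (pow_le_pow_left₀ (by positivity) (le_max_right _ _) k).trans
        (pow_le_pow_right₀ (le_max_left _ _) hk')
  refine (v.sum_le _ _).trans ((sum_le_sum hterm).trans ?_)
  rw [sum_const, card_range, nsmul_eq_mul, ← mul_assoc]
  refine mul_le_mul_of_nonneg_right ?_ (by positivity)
  have hb : ((b + 1 : ℕ) : ℝ) ≤ 2 ^ b := by exact_mod_cast Nat.lt_two_pow_self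
  calc ((b + 1 : ℕ) : ℝ) * (2 ^ (a + b + c + 1) * 2 ^ (a + b))
      ≤ 2 ^ b * (2 ^ (a + b + c + 1) * 2 ^ (a + b)) := by gcongr
    _ = 2 ^ (b + (a + b + c + 1 + (a + b))) := by rw [← pow_add, ← pow_add]
    _ ≤ 2 ^ (3 * (a + b + c) + 1) := pow_le_pow_right₀ one_le_two (by lia)

/-- Two solutions `x`, `y` of the unit equation are linearly independent from one of two
consecutive Padé forms. -/
lemma exists_minor_ne_zero [CharZero K] (N : ℕ) {x y : K} (hx : x ≠ 0) (hx1 : 1 - x ≠ 0)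
    (hy : y ≠ 0) :
    ∃ ε : ℕ, ε ≤ 1 ∧
      y / x ^ (2 * N + 1 + ε) * ((-1) ^ N * padeSum N (N + ε) N (1 - x)) -
        (1 - y) / (1 - x) ^ (2 * N + 1) * padeSum (N + ε) N N x ≠ 0 := by
  by_contra! h
  have key (ε : ℕ) (hε : ε ≤ 1) : integral 0 x (integrand (N + ε) N N x) =
      y * integral 0 1 (integrand (N + ε) N N x) := by
    have h0 := h ε hε
    have hm : (((N + ε) + N + N + 1).factorial : K) ≠ 0 := by
      exact_mod_cast Nat.factorial_ne_zero _
    apply mul_left_cancel₀ hm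
    have e1 := integral_integrand_zero_x (N + ε) N N x
    have e2 := integral_integrand_zero_one (N + ε) N N hx
    have e3 := padeSum_identity (N + ε) N N hx
    rw [show N + ε + N + 1 = 2 * N + 1 + ε by ring] at e1 e3
    rw [show N + N + 1 = 2 * N + 1 by ring] at e3
    have h1 : y * ((1 - x) ^ (2 * N + 1) * ((-1) ^ N * padeSum N (N + ε) N (1 - x))) =
        (1 - y) * (x ^ (2 * N + 1 + ε) * padeSum (N + ε) N N x) := by
      field_simp at h0
      linear_combination h0
    rw [e1, mul_left_comm _ y, e2, mul_left_comm y]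
    congr 1
    linear_combination y * e3 - h1
  exact integral_integrand_ne N (fun hx' => hx1 (by rw [hx', sub_self])) hy
    (key 0 zero_le_one) (key 1 le_rfl)

lemma abv_minor_le [CharZero K] (v : AbsoluteValue K ℝ) {N : ℕ} (hN : 1 ≤ N) {ε : ℕ} (hε : ε ≤ 1)
    {x y : K} (hx : x ≠ 0) (hx1 : 1 - x ≠ 0) :
    v (y / x ^ (2 * N + 1 + ε) * ((-1) ^ N * padeSum N (N + ε) N (1 - x)) -
        (1 - y) / (1 - x) ^ (2 * N + 1) * padeSum (N + ε) N N x) *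
      max 1 (max (v x) (v (1 - x))) ^ N ≤
    2 ^ (14 * N) * max 1 (max (v (y / x ^ (2 * N + 1 + ε)))
      (v ((1 - y) / (1 - x) ^ (2 * N + 1)))) := by
  have e3 := padeSum_identity (N + ε) N N hx
  rw [show N + ε + N + 1 = 2 * N + 1 + ε by ring, show N + N + 1 = 2 * N + 1 by ring] at e3
  set T := max 1 (max (v x) (v (1 - x))) with hT
  have hT1 : 1 ≤ T := le_max_left _ _
  have hTx : max 1 (v x) ≤ T := max_le_max le_rfl (le_max_left _ _)
  have hTx' : max 1 (v (1 - x)) ≤ T := max_le_max le_rfl (le_max_right _ _)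
  set W : ℝ := 2 ^ (13 * N) * T ^ (N + 1) with hW
  have hWbound (e n : ℕ) (he : e ≤ 13 * N) (hn : n ≤ N + 1) (t : ℝ) (ht0 : 0 ≤ t) (ht : t ≤ T) :
      2 ^ e * t ^ n ≤ W :=
    mul_le_mul (pow_le_pow_right₀ one_le_two he)
      ((pow_le_pow_left₀ ht0 ht n).trans (pow_le_pow_right₀ hT1 hn)) (by positivity)
      (by positivity)
  have hw1 : v (padeSum (N + ε) N N x) ≤ W :=
    (abv_padeSum_le v _ _ _ _).trans (hWbound _ _ (by lia) (by lia) _ (by positivity) hTx)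
  have hw2 : v ((-1) ^ N * padeSum N (N + ε) N (1 - x)) ≤ W := by
    rw [map_mul, map_pow, v.map_neg, map_one, one_pow, one_mul]
    exact (abv_padeSum_le v _ _ _ _).trans (hWbound _ _ (by lia) (by lia) _ (by positivity) hTx')
  have hw3 : v (x ^ N * padeSum (N + ε) N N x⁻¹) ≤ W := by
    have hvx : 0 < v x := v.pos hx
    rw [map_mul, map_pow]
    refine (mul_le_mul_of_nonneg_left (abv_padeSum_le v _ _ _ _) (by positivity)).trans ?_
    rw [mul_left_comm, ← mul_pow, map_inv₀, mul_max_of_nonneg _ _ hvx.le, mul_inv_cancel₀ hvx.ne',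
      mul_one, max_comm]
    exact hWbound _ _ (by lia) (by lia) _ (by positivity) hTx
  set z1 := y / x ^ (2 * N + 1 + ε) with hz1
  set z2 := (1 - y) / (1 - x) ^ (2 * N + 1) with hz2
  have hz : z1 * x ^ (2 * N + 1 + ε) + z2 * (1 - x) ^ (2 * N + 1) = 1 := by
    rw [hz1, hz2, div_mul_cancel₀ _ (pow_ne_zero _ hx), div_mul_cancel₀ _ (pow_ne_zero _ hx1)]
    ring
  set w1 := padeSum (N + ε) N N x
  set w2 := (-1) ^ N * padeSum N (N + ε) N (1 - x)
  set w3 := x ^ N * padeSum (N + ε) N N x⁻¹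
  set Z := max 1 (max (v z1) (v z2)) with hZ
  have hZ1 : 1 ≤ Z := le_max_left _ _
  have hZz1 : v z1 ≤ Z := (le_max_left _ _).trans (le_max_right _ _)
  have hZz2 : v z2 ≤ Z := (le_max_right _ _).trans (le_max_right _ _)
  have hW0 : 0 ≤ W := by positivity
  have hsub (p q r s : K) (hp : v p ≤ Z) (hq : v q ≤ W) (hr : v r ≤ Z) (hs : v s ≤ W) :
      v (p * q - r * s) ≤ 2 * (Z * W) := by
    have h1 : v (p * q - r * s) ≤ v (p * q) + v (r * s) := v.sub_le_add _ _
    rw [map_mul, map_mul] at h1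
    have h2 := mul_le_mul hp hq (v.nonneg _) (zero_le_one.trans hZ1)
    have h3 := mul_le_mul hr hs (v.nonneg _) (zero_le_one.trans hZ1)
    linarith
  have hone : v 1 ≤ Z := by rwa [map_one]
  have hmain : v (z1 * w2 - z2 * w1) * T ^ (2 * N + 1) ≤ 2 * (Z * W) := by
    rcases max_choice 1 (max (v x) (v (1 - x))) with h | h
    · rw [hT, h, one_pow, mul_one]
      exact hsub _ _ _ _ hZz1 hw2 hZz2 hw1
    rcases max_choice (v x) (v (1 - x)) with h' | h'
    · have hTv : T = v x := by rw [hT, h, h']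
      have e : (z1 * w2 - z2 * w1) * x ^ (2 * N + 1 + ε) = 1 * w2 - z2 * w3 := by
        linear_combination w2 * hz - z2 * e3
      calc _ ≤ v (z1 * w2 - z2 * w1) * T ^ (2 * N + 1 + ε) :=
            mul_le_mul_of_nonneg_left (pow_le_pow_right₀ hT1 (by lia)) (v.nonneg _)
        _ = v (1 * w2 - z2 * w3) := by rw [← e, hTv, map_mul, map_pow]
        _ ≤ _ := hsub _ _ _ _ hone hw2 hZz2 hw3
    · have hTv : T = v (1 - x) := by rw [hT, h, h']
      have e : (z1 * w2 - z2 * w1) * (1 - x) ^ (2 * N + 1) = z1 * w3 - 1 * w1 := by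
        linear_combination z1 * e3 - w1 * hz
      rw [hTv, ← map_pow, ← map_mul, e]
      exact hsub _ _ _ _ hZz1 hw3 hone hw1
  have hTpos : 0 < T ^ (N + 1) := by positivity
  refine le_of_mul_le_mul_right ?_ hTpos
  calc _ = v (z1 * w2 - z2 * w1) * T ^ (2 * N + 1) := by ring
    _ ≤ 2 * (Z * W) := hmain
    _ = 2 ^ (13 * N + 1) * Z * T ^ (N + 1) := by rw [hW]; ring
    _ ≤ _ := by gcongr <;> [norm_num; lia]

end GapPrinciple

section UnitEquation

open Finset

variable {K ι : Type*} [Field K] [Fintype ι]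

/-- The logarithms of the absolute values of `x` and `1 - x`. -/
noncomputable def logEmbedding (v : ι → AbsoluteValue K ℝ) (x : K) : ι ⊕ ι → ℝ :=
  Sum.elim (fun i => Real.log (v i x)) (fun i => Real.log (v i (1 - x)))

/-- The set of solutions of the unit equation `x + y = 1` in a subring of a field. -/
def unitSolutions (R : Subring K) : Set K :=
  {x | x ≠ 0 ∧ 1 - x ≠ 0 ∧ x ∈ R ∧ x⁻¹ ∈ R ∧ 1 - x ∈ R ∧ (1 - x)⁻¹ ∈ R}

lemma sum_log_eq_zero {v : ι → AbsoluteValue K ℝ} {R : Subring K}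
    (hR : ∀ a ∈ R, a ≠ 0 → 1 ≤ ∏ i, v i a) {x : K} (hx0 : x ≠ 0) (hx : x ∈ R) (hx' : x⁻¹ ∈ R) :
    ∑ i, Real.log (v i x) = 0 := by
  have key (a : K) (ha : a ≠ 0) (haR : a ∈ R) : 0 ≤ ∑ i, Real.log (v i a) := by
    rw [← Real.log_prod fun i _ => ((v i).pos ha).ne']
    exact Real.log_nonneg (hR a haR ha)
  have h1 := key x hx0 hx
  have h2 := key x⁻¹ (inv_ne_zero hx0) hx'
  simp only [map_inv₀, Real.log_inv, sum_neg_distrib] at h2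
  linarith

lemma abs_le_sum_of_sum_eq_zero {f g : ι → ℝ} (hf : ∑ i, f i = 0) (hg : ∀ i, 0 ≤ g i)
    (hfg : ∀ i, f i ≤ g i) (i : ι) : |f i| ≤ ∑ j, g j := by
  classical
  rw [abs_le]
  constructor
  · have h1 := add_sum_erase univ f (mem_univ i)
    have h2 : ∑ j ∈ univ.erase i, f j ≤ ∑ j, g j :=
      (sum_le_sum fun j _ => hfg j).trans
        (sum_le_sum_of_subset_of_nonneg (erase_subset _ _) fun j _ _ => hg j)
    linarith
  · exact (hfg i).trans (single_le_sum (fun j _ => hg j) (mem_univ i))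

lemma norm_logEmbedding_le {v : ι → AbsoluteValue K ℝ} {R : Subring K}
    (hR : ∀ a ∈ R, a ≠ 0 → 1 ≤ ∏ i, v i a) {x : K} (hx : x ∈ unitSolutions R) :
    ‖logEmbedding v x‖ ≤ ∑ i, Real.log (max 1 (max (v i x) (v i (1 - x)))) := by
  obtain ⟨hx0, hx1, hxR, hxR', hyR, hyR'⟩ := hx
  have hnonneg (i : ι) : 0 ≤ Real.log (max 1 (max (v i x) (v i (1 - x)))) :=
    Real.log_nonneg (le_max_left _ _)
  rw [pi_norm_le_iff_of_nonneg (sum_nonneg fun i _ => hnonneg i)]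
  rintro (i | i)
  · exact abs_le_sum_of_sum_eq_zero (sum_log_eq_zero hR hx0 hxR hxR') hnonneg
      (fun j => Real.log_le_log ((v j).pos hx0) ((le_max_left _ _).trans (le_max_right _ _))) i
  · exact abs_le_sum_of_sum_eq_zero (sum_log_eq_zero hR hx1 hyR hyR') hnonneg
      (fun j => Real.log_le_log ((v j).pos hx1) ((le_max_right _ _).trans (le_max_right _ _))) i

lemma gap_logEmbedding [CharZero K] {v : ι → AbsoluteValue K ℝ} {R : Subring K}
    (hR : ∀ a ∈ R, a ≠ 0 → 1 ≤ ∏ i, v i a) {x y : K} (hx : x ∈ unitSolutions R)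
    (hy : y ∈ unitSolutions R) {N : ℕ} (hN : 1 ≤ N) :
    N * ‖logEmbedding v x‖ ≤ Fintype.card ι * (14 * N +
      ‖logEmbedding v y - (2 * N + 1 : ℝ) • logEmbedding v x‖ + ‖logEmbedding v x‖) := by
  have hle := norm_logEmbedding_le hR hx
  obtain ⟨hx0, hx1, hxR, hxR', hxS, hxS'⟩ := hx
  obtain ⟨hy0, hy1, hyR, hyR', hyS, hyS'⟩ := hy
  obtain ⟨ε, hε, hne⟩ := exists_minor_ne_zero N hx0 hx1 hy0
  set D := ‖logEmbedding v y - (2 * N + 1 : ℝ) • logEmbedding v x‖ with hD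
  set P := ‖logEmbedding v x‖ with hP
  have hε' : (ε : ℝ) ≤ 1 := by exact_mod_cast hε
  have hloc (i : ι) := abv_minor_le (v i) hN hε (y := y) hx0 hx1
  set lam := y / x ^ (2 * N + 1 + ε) * ((-1) ^ N * padeSum N (N + ε) N (1 - x)) -
        (1 - y) / (1 - x) ^ (2 * N + 1) * padeSum (N + ε) N N x with hlam
  have hmem : lam ∈ R := by
    rw [hlam, div_eq_mul_inv, div_eq_mul_inv, ← inv_pow, ← inv_pow]
    exact sub_mem (mul_mem (mul_mem hyR (pow_mem hxR' _))
      (mul_mem (pow_mem (neg_mem (one_mem R)) _) (padeSum_mem R _ _ _ hxS)))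
      (mul_mem (mul_mem hyS (pow_mem hxS' _)) (padeSum_mem R _ _ _ hxR))
  have hlog : 0 ≤ ∑ i, Real.log (v i lam) := by
    rw [← Real.log_prod fun i _ => ((v i).pos hne).ne']
    exact Real.log_nonneg (hR lam hmem hne)
  have hterm (i : ι) : Real.log (v i lam) + N * Real.log (max 1 (max (v i x) (v i (1 - x)))) ≤
      14 * N + D + P := by
    have hvl := (v i).pos hne
    have hTpos : 0 < max 1 (max (v i x) (v i (1 - x))) := lt_max_of_lt_left one_pos
    have hZpos : 0 < max 1 (max (v i (y / x ^ (2 * N + 1 + ε)))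
      (v i ((1 - y) / (1 - x) ^ (2 * N + 1)))) := lt_max_of_lt_left one_pos
    have h := Real.log_le_log (by positivity) (hloc i)
    rw [Real.log_mul hvl.ne' (by positivity), Real.log_pow, Real.log_mul (by positivity) hZpos.ne',
      Real.log_pow] at h
    have hlog2 : ((14 * N : ℕ) : ℝ) * Real.log 2 ≤ 14 * N := by
      push_cast
      have := Real.log_two_lt_d9
      exact mul_le_of_le_one_right (by positivity) (by linarith)
    have hDl : |Real.log (v i y) - (2 * N + 1) * Real.log (v i x)| ≤ D :=
      norm_le_pi_norm (logEmbedding v y - (2 * N + 1 : ℝ) • logEmbedding v x) (Sum.inl i)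
    have hDr : |Real.log (v i (1 - y)) - (2 * N + 1) * Real.log (v i (1 - x))| ≤ D :=
      norm_le_pi_norm (logEmbedding v y - (2 * N + 1 : ℝ) • logEmbedding v x) (Sum.inr i)
    have hPl : |Real.log (v i x)| ≤ P := norm_le_pi_norm (logEmbedding v x) (Sum.inl i)
    have hD0 : 0 ≤ D := norm_nonneg _
    have hP0 : 0 ≤ P := norm_nonneg _
    have hZ : Real.log (max 1 (max (v i (y / x ^ (2 * N + 1 + ε)))
        (v i ((1 - y) / (1 - x) ^ (2 * N + 1))))) ≤ D + P := by
      rw [← Real.log_exp (D + P)]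
      refine Real.log_le_log hZpos (max_le (Real.one_le_exp (by positivity)) (max_le ?_ ?_))
      · rw [← Real.log_le_iff_le_exp ((v i).pos (div_ne_zero hy0 (pow_ne_zero _ hx0))), map_div₀,
          map_pow, Real.log_div ((v i).pos hy0).ne' (pow_ne_zero _ ((v i).pos hx0).ne'),
          Real.log_pow]
        push_cast
        have h3 : -((ε : ℝ) * Real.log (v i x)) ≤ P := by
          refine (neg_le_abs _).trans ?_
          rw [abs_mul, Nat.abs_cast]
          exact (mul_le_of_le_one_left (abs_nonneg _) hε').trans hPl
        linarith [le_abs_self (Real.log (v i y) - (2 * N + 1) * Real.log (v i x))]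
      · rw [← Real.log_le_iff_le_exp ((v i).pos (div_ne_zero hy1 (pow_ne_zero _ hx1))), map_div₀,
          map_pow, Real.log_div ((v i).pos hy1).ne' (pow_ne_zero _ ((v i).pos hx1).ne'),
          Real.log_pow]
        push_cast
        linarith [le_abs_self (Real.log (v i (1 - y)) - (2 * N + 1) * Real.log (v i (1 - x)))]
    linarith
  have hsum := sum_le_sum fun i (_ : i ∈ univ) => hterm i
  rw [sum_add_distrib, ← mul_sum, sum_const, nsmul_eq_mul, card_univ] at hsum
  have := mul_le_mul_of_nonneg_left hle (Nat.cast_nonneg (α := ℝ) N)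
  linarith

/-- Finiteness of the solutions of the unit equation in a subring which satisfies a product
inequality and a Northcott property with respect to finitely many absolute values. -/
theorem finite_unitSolutions [CharZero K] (v : ι → AbsoluteValue K ℝ) (R : Subring K)
    (hR : ∀ a ∈ R, a ≠ 0 → 1 ≤ ∏ i, v i a)
    (hfin : ∀ B : ℝ, {a ∈ R | ∀ i, v i a ≤ B}.Finite) : (unitSolutions R).Finite := by
  refine finite_of_gap _ (logEmbedding v) (Fintype.card ι) (Nat.cast_nonneg _) (fun B => ?_)
    fun x hx y hy N hN => gap_logEmbedding hR hx hy hN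
  refine (hfin (Real.exp B)).subset fun x ⟨hx, hxB⟩ => ⟨hx.2.2.1, fun i => ?_⟩
  rw [← Real.log_le_iff_le_exp ((v i).pos hx.1)]
  exact (le_abs_self _).trans ((norm_le_pi_norm (logEmbedding v x) (Sum.inl i)).trans hxB)

end UnitEquation

section NumberField

open NumberField

variable {K : Type*} [Field K] [NumberField K]

/-- The archimedean absolute values of `K`, counted with multiplicity, and the finite places
in `T`. -/
def placesAbv (T : Finset (FinitePlace K)) :
    (Σ w : InfinitePlace K, Fin w.mult) ⊕ T → AbsoluteValue K ℝ :=
  Sum.elim (fun p => p.1.1) (fun w => w.1.1)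

lemma prod_placesAbv (T : Finset (FinitePlace K)) (f : AbsoluteValue K ℝ → ℝ) :
    ∏ i, f (placesAbv T i) =
      (∏ w : InfinitePlace K, f w.1 ^ w.mult) * ∏ w ∈ T, f w.1 := by
  simp only [placesAbv, Fintype.prod_sum_type, Fintype.prod_sigma, Sum.elim_inl, Sum.elim_inr,
    Finset.prod_const, Finset.card_univ, Fintype.card_fin]
  rw [Finset.prod_coe_sort T fun w => f w.1]

lemma one_le_prod_placesAbv {T : Finset (FinitePlace K)} {a : K} (ha0 : a ≠ 0)
    (ha : ∀ w ∉ T, w a ≤ 1) : 1 ≤ ∏ i, placesAbv T i a := by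
  rw [prod_placesAbv T fun w => w a, ← prod_abs_eq_one ha0]
  refine mul_le_mul_of_nonneg_left ?_
    (Finset.prod_nonneg fun w _ => pow_nonneg (apply_nonneg w a) _)
  rw [← finprod_mem_coe_finset, finprod_mem_def]
  refine finprod_le_finprod (FinitePlace.hasFiniteMulSupport ha0) (fun w => apply_nonneg w a)
    (T.finite_toSet.subset Set.mulSupport_mulIndicator_subset) fun w => ?_
  by_cases hw : w ∈ (T : Set (FinitePlace K))
  · rw [Set.mulIndicator_of_mem hw]; rfl
  · rw [Set.mulIndicator_of_notMem hw]; exact ha w hw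

lemma finite_placesAbv_le (T : Finset (FinitePlace K)) (B : ℝ) :
    {a : K | (∀ w ∉ T, w a ≤ 1) ∧ ∀ i, placesAbv T i a ≤ B}.Finite := by
  refine (finite_setOfPred_mulHeight₁_le K
    (max B 1 ^ Fintype.card ((Σ w : InfinitePlace K, Fin w.mult) ⊕ T))).subset ?_
  rintro a ⟨ha, haB⟩
  have h : ∏ᶠ w : FinitePlace K, max (w a) 1 = ∏ w ∈ T, max (w.1 a) 1 := by
    rw [← finprod_mem_coe_finset, finprod_mem_def]
    refine finprod_congr fun w => ?_
    by_cases hw : w ∈ (T : Set (FinitePlace K))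
    · rw [Set.mulIndicator_of_mem hw]; rfl
    · rw [Set.mulIndicator_of_notMem hw]; exact max_eq_right (ha w hw)
  have h' := prod_placesAbv T fun w => max (w a) 1
  rw [← h] at h'
  change Height.mulHeight₁ a ≤ _
  rw [mulHeight₁_eq]
  refine h'.symm.le.trans ?_
  rw [← Finset.card_univ, ← Finset.prod_const]
  exact Finset.prod_le_prod (fun i _ => by positivity) fun i _ => max_le_max (haB i) le_rfl

/-- The unit equation `x + y = 1` has finitely many solutions in a ring of `S`-integers. -/
theorem finite_unitSolutions_integer
    (S : Finset (IsDedekindDomain.HeightOneSpectrum (𝓞 K))) :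
    (unitSolutions (((S : Set (IsDedekindDomain.HeightOneSpectrum (𝓞 K))).integer
      K).toSubring)).Finite := by
  classical
  have hmem (a : K) (ha : a ∈ ((S : Set (IsDedekindDomain.HeightOneSpectrum (𝓞 K))).integer
      K).toSubring) (w : FinitePlace K) (hw : w ∉ S.image FinitePlace.mk) : w a ≤ 1 := by
    have hS : w.maximalIdeal ∉ S := fun h =>
      hw (Finset.mem_image.mpr ⟨_, h, FinitePlace.mk_maximalIdeal w⟩)
    rw [← FinitePlace.norm_embedding_eq, FinitePlace.norm_embedding']
    exact_mod_cast (WithZeroMulInt.toNNReal_le_one_iff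
      (NumberField.HeightOneSpectrum.one_lt_absNorm_nnreal _)).mpr (ha w.maximalIdeal hS)
  refine finite_unitSolutions (placesAbv (S.image FinitePlace.mk)) _
    (fun a ha ha0 => one_le_prod_placesAbv ha0 (hmem a ha)) fun B => ?_
  exact (finite_placesAbv_le _ B).subset fun a ha => ⟨hmem a ha.1, ha.2⟩

end NumberField

section QuadraticForm

/-- A solution of `y ^ 2 = D ^ 2 * u ^ 2 + D * u * E * v + E ^ 2 * v ^ 2` in units `u`, `v` gives a
solution of the unit equation, from which `y / (E * v)` can be recovered. -/
lemma mem_unitSolutions_of_sq_eq {K : Type*} [Field K] [CharZero K] {R : Subring K} {p q y : K}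
    (hp0 : p ≠ 0) (hq0 : q ≠ 0) (hp : p ∈ R) (hp' : p⁻¹ ∈ R) (hq : q ∈ R) (hq' : q⁻¹ ∈ R)
    (hy : y ∈ R) (h2 : (2 : K)⁻¹ ∈ R) (h3 : (3 : K)⁻¹ ∈ R)
    (h : y ^ 2 = p ^ 2 + p * q + q ^ 2) :
    ∃ x ∈ unitSolutions R, y = q * ((1 - x + 3 * (1 - x)⁻¹) / 4) := by
  have h2R : (2 : K) ∈ R := ofNat_mem R 2
  set a := 2 * ((p + q - y) * q⁻¹) with ha
  set b := 2 * ((p + q + y) * q⁻¹) with hb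
  have haR : a ∈ R := mul_mem h2R (mul_mem (sub_mem (add_mem hp hq) hy) hq')
  have hbR : b ∈ R := mul_mem h2R (mul_mem (add_mem (add_mem hp hq) hy) hq')
  have hab : a * (b * (2⁻¹ * 2⁻¹ * (q * p⁻¹))) = 1 := by
    rw [ha, hb]
    field_simp
    linear_combination -h
  have hab' : (1 - a) * ((b - 1) * 3⁻¹) = 1 := by
    rw [ha, hb]
    field_simp
    linear_combination 4 * h
  have ha' : a⁻¹ = b * (2⁻¹ * 2⁻¹ * (q * p⁻¹)) := inv_eq_of_mul_eq_one_right hab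
  have ha1' : (1 - a)⁻¹ = (b - 1) * 3⁻¹ := inv_eq_of_mul_eq_one_right hab'
  refine ⟨a, ⟨left_ne_zero_of_mul_eq_one hab, left_ne_zero_of_mul_eq_one hab', haR, ?_,
    sub_mem (one_mem R) haR, ?_⟩, ?_⟩
  · rw [ha']
    exact mul_mem hbR (mul_mem (mul_mem h2 h2) (mul_mem hq hp'))
  · rw [ha1']
    exact mul_mem (sub_mem hbR (one_mem R)) h3
  · rw [ha1', ha, hb]
    field_simp
    ring

lemma mul_inv_mem_of_sq_eq_sq {K : Type*} [Field K] {A y : K} {c : Kˣ}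
    (h : y ^ 2 = A ^ 2 * c ^ 2) :
    y * (c⁻¹ : Kˣ) ∈ ({A, -A} : Set K) := by
  rw [← mul_pow] at h
  rcases sq_eq_sq_iff_eq_or_eq_neg.mp h with h | h
  · exact Or.inl (by rw [h, Units.mul_inv_cancel_right])
  · exact Or.inr (by rw [h, ← neg_mul, Units.mul_inv_cancel_right]; rfl)

variable {K : Type*} [Field K] [NumberField K]

lemma exists_finset_superset_mem_integer
    (S : Finset (HeightOneSpectrum (NumberField.RingOfIntegers K))) (F : Finset K) :
    ∃ S', S ⊆ S' ∧ ∀ a ∈ F, a ∈ sIntegers K S' := by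
  classical
  refine ⟨S ∪ F.biUnion fun a =>
    (HeightOneSpectrum.Support.finite (NumberField.RingOfIntegers K) a).toFinset,
    Finset.subset_union_left, fun a ha w hw => ?_⟩
  by_contra! hlt
  refine hw (Finset.mem_coe.mpr (Finset.mem_union_right _ (Finset.mem_biUnion.mpr ⟨a, ha, ?_⟩)))
  exact (Set.Finite.mem_toFinset _).mpr hlt

lemma exists_finite_div_mem {S : Finset (HeightOneSpectrum (NumberField.RingOfIntegers K))}
    {D E : K} (hD : D ≠ 0) (hE : E ≠ 0) :
    ∃ F : Set K, F.Finite ∧ ∀ y ∈ sIntegers K S,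
      ∀ u ∈ (S : Set (HeightOneSpectrum (NumberField.RingOfIntegers K))).unit K,
      ∀ v ∈ (S : Set (HeightOneSpectrum (NumberField.RingOfIntegers K))).unit K,
      y ^ 2 = D ^ 2 * u ^ 2 + D * u * E * v + E ^ 2 * v ^ 2 → y * (v⁻¹ : Kˣ) ∈ F := by
  classical
  obtain ⟨S', hSS', hS'⟩ := exists_finset_superset_mem_integer S {D, D⁻¹, E, E⁻¹, 2⁻¹, 3⁻¹}
  simp only [Finset.mem_insert, Finset.mem_singleton, forall_eq_or_imp, forall_eq] at hS'
  obtain ⟨hDR, hDR', hER, hER', h2, h3⟩ := hS'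
  refine ⟨_, (finite_unitSolutions_integer S').image
    fun x => E * ((1 - x + 3 * (1 - x)⁻¹) / 4), fun y hy u hu v hv h => ?_⟩
  have hmono {a : K} (ha : a ∈ sIntegers K S) : a ∈ sIntegers K S' :=
    fun w hw => ha w fun hwS => hw (hSS' hwS)
  have hunit {a : Kˣ} (ha : a ∈ (S : Set (HeightOneSpectrum _)).unit K) :
      (a : K) ∈ sIntegers K S' := hmono fun w hw => (ha w hw).le
  obtain ⟨x, hx, hxy⟩ := mem_unitSolutions_of_sq_eq (R := (sIntegers K S').toSubring)
    (p := D * u) (q := E * v) (y := y) (mul_ne_zero hD u.ne_zero) (mul_ne_zero hE v.ne_zero)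
    (mul_mem hDR (hunit hu))
    (by rw [mul_inv, ← Units.val_inv_eq_inv_val]; exact mul_mem hDR' (hunit (inv_mem hu)))
    (mul_mem hER (hunit hv))
    (by rw [mul_inv, ← Units.val_inv_eq_inv_val]; exact mul_mem hER' (hunit (inv_mem hv)))
    (hmono hy) h2 h3 (by rw [h]; ring)
  refine ⟨x, hx, ?_⟩
  rw [hxy, Units.val_inv_eq_inv_val]
  field_simp

lemma span_singleton_eq_of_mul_unit {S : Finset (HeightOneSpectrum (NumberField.RingOfIntegers K))}
    (y z : sIntegers K S) (c : Kˣ)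
    (hc : c ∈ (S : Set (HeightOneSpectrum (NumberField.RingOfIntegers K))).unit K)
    (h : (z : K) = y * c) : Ideal.span {z} = Ideal.span {y} := by
  have hz : z = y * ((Set.unitEquivUnitsInteger _ K ⟨c, hc⟩ : (sIntegers K S)ˣ) : sIntegers K S) :=
    Subtype.ext h
  rw [hz, Ideal.span_singleton_mul_right_unit (Units.isUnit _)]

lemma finite_span_singleton {S : Finset (HeightOneSpectrum (NumberField.RingOfIntegers K))}
    {F : Set K} (hF : F.Finite) :
    {I : Ideal (sIntegers K S) | ∃ y : sIntegers K S, I = Ideal.span {y} ∧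
      ∃ c ∈ (S : Set (HeightOneSpectrum (NumberField.RingOfIntegers K))).unit K,
        (y : K) * c ∈ F}.Finite := by
  refine ((hF.preimage Subtype.val_injective.injOn).image
    fun z : sIntegers K S => Ideal.span {z}).subset ?_
  rintro I ⟨y, rfl, c, hc, hcF⟩
  exact ⟨⟨y * c, mul_mem y.2 fun w hw => (hc w hw).le⟩, hcF,
    span_singleton_eq_of_mul_unit _ _ c hc rfl⟩

end QuadraticForm

end UnitEquation

/-- for fixed `D, E ∈ K`, the set of principal ideals `y·R_S` with `y` an
`S`-integer such that `y² = D²u² + DuEv + E²v²` for some `S`-units `u, v` is finite. -/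
theorem finite_principal_ideals_of_quadratic_unit_eq {K : Type*} [Field K] [NumberField K]
    (S : Finset (HeightOneSpectrum (NumberField.RingOfIntegers K)))
    (D E : K) :
    {I : Ideal (sIntegers K S) | ∃ y : sIntegers K S, I = Ideal.span {y} ∧
        ∃ u v : Kˣ,
          u ∈ (S : Set (HeightOneSpectrum (NumberField.RingOfIntegers K))).unit K ∧
          v ∈ (S : Set (HeightOneSpectrum (NumberField.RingOfIntegers K))).unit K ∧
          (y : K) ^ 2 = D ^ 2 * u ^ 2 + D * u * E * v + E ^ 2 * v ^ 2}.Finite := by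
  rcases eq_or_ne D 0 with rfl | hD
  · refine (UnitEquation.finite_span_singleton (Set.toFinite {E, -E})).subset ?_
    rintro I ⟨y, rfl, u, v, -, hv, h⟩
    exact ⟨y, rfl, v⁻¹, inv_mem hv, UnitEquation.mul_inv_mem_of_sq_eq_sq (by rw [h]; ring)⟩
  rcases eq_or_ne E 0 with rfl | hE
  · refine (UnitEquation.finite_span_singleton (Set.toFinite {D, -D})).subset ?_
    rintro I ⟨y, rfl, u, v, hu, -, h⟩
    exact ⟨y, rfl, u⁻¹, inv_mem hu, UnitEquation.mul_inv_mem_of_sq_eq_sq (by rw [h]; ring)⟩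
  obtain ⟨F, hF, hFmem⟩ := UnitEquation.exists_finite_div_mem (S := S) hD hE
  refine (UnitEquation.finite_span_singleton hF).subset ?_
  rintro I ⟨y, rfl, u, v, hu, hv, h⟩
  exact ⟨y, rfl, v⁻¹, inv_mem hv, hFmem y y.2 u hu v hv h⟩
end
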